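/- Let m, p, N be positive integers and let ζ be a complex number with ζ^N = 1. Set ξ = ζ^{−1}. Then ζ · Σ_{N−1 ≥ n_{2mp−1} ≥ ⋯ ≥ n_1 ≥ 0} (ζ;ζ)_{n_{2mp−1}} (−1)^{n_{2mp−1}} ζ^{−n_{2mp−1}(n_{2mp−1}+1)/2} · ∏_{1 ≤ i < j ≤ 2mp−1, m ∤ i} ζ^{ε_{i,j,m} n_i n_j} · ∏_{i=1}^{2p−1} (−1)^{n_{mi}} ζ^{n_{mi}(n_{mi}+1)/2} · ∏_{i=1}^{2mp−2} ζ^{−n_i n_{i+1} + γ_{i,m} n_i} [n_{i+1}; n_i]_ζ = Σ_{N−1 ≥ n ≥ 0, n = n_m ≥ n_{m−1} ≥ ⋯ ≥ n_1 ≥ 0, n = s_p ≥ s_{p−1} ≥ ⋯ ≥ s_1 ≥ 0} ((ξ;ξ)_n)² ξ^n ∏_{i=1}^{m−1} ξ^{n_i²+n_i} [n_{i+1}; n_i]_ξ ∏_{j=1}^{p−1} ξ^{s_j²+s_j} [s_{j+1}; s_j]_ξ. (The left-hand side is the generalized Kontsevich–Zagier function F_{m,p}(ζ) and the right-hand side is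 the generalized U-function U_{m,p}(−1; ζ^{−1}); truncating both sums at N−1 loses nothing since (ζ;ζ)_n = 0 for n ≥ N.) -/

import Mathlib

open Finset

noncomputable section

/-- The q-Pochhammer symbol `(a; q)_n = ∏_{k=0}^{n-1} (1 - a q^k)`. -/
def qPoch (a q : ℂ) (n : ℕ) : ℂ := ∏ k ∈ Finset.range n, (1 - a * q ^ k)

/-- The Gaussian binomial coefficient `[n; k]_q` as a polynomial in `q` over `ℤ`,
defined by the q-Pascal rule `[n; k] = [n-1; k-1] + q^k [n-1; k]`.  It is the
polynomial equal to `(q;q)_n / ((q;q)_{n-k} (q;q)_k)`. -/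
def gaussPoly : ℕ → ℕ → Polynomial ℤ
  | _, 0 => 1
  | 0, _ + 1 => 0
  | n + 1, k + 1 => gaussPoly n k + Polynomial.X ^ (k + 1) * gaussPoly n (k + 1)

/-- The Gaussian binomial coefficient `[n; k]_q` evaluated at `q : ℂ`. -/
def gbin (q : ℂ) (n k : ℕ) : ℂ := Polynomial.aeval q (gaussPoly n k)

/-- `σ_j = (-1)^⌊(2j-1)t/l⌋`. -/
def sigmaT (l t j : ℕ) : ℤ := (-1) ^ ((2 * j - 1) * t / l)

/-- `r(j)`: the unique integer with `r(j) ≡ (2j-1)t (mod 2l)` and `-l < r(j) < l`. -/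
def rT (l t j : ℕ) : ℤ :=
  if (((2 * j - 1) * t % (2 * l) : ℕ) : ℤ) < (l : ℤ) then (((2 * j - 1) * t % (2 * l) : ℕ) : ℤ)
  else (((2 * j - 1) * t % (2 * l) : ℕ) : ℤ) - 2 * (l : ℤ)

/-- `r'(j) = (|r(j)| + 1)/2`. -/
def rpT (l t j : ℕ) : ℕ := ((rT l t j).natAbs + 1) / 2

open Classical in
/-- `i_k`: the unique `j ∈ {1, …, (l-1)/2}` with `r'(j) = k`. -/
def iT (l t k : ℕ) : ℕ :=
  if h : ∃ j, j ∈ Finset.Icc 1 ((l - 1) / 2) ∧ rpT l t j = k then h.choose else 0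

/-- `ε_{i,j,m}`: `1` if `j ≡ -i, -i-1 (mod 2m)`, `-1` if `j ≡ i, i-1 (mod 2m)`,
`0` otherwise (and `0` when `m ∣ i`, a case excluded in all uses). -/
def epsLO (m i j : ℕ) : ℤ :=
  if m ∣ i then 0
  else if 2 * m ∣ (i + j) ∨ 2 * m ∣ (i + j + 1) then 1
  else if (2 * (m : ℤ)) ∣ ((j : ℤ) - (i : ℤ)) ∨ (2 * (m : ℤ)) ∣ ((j : ℤ) - (i : ℤ) + 1) then -1
  else 0

/-- `Δ_{i,j,m}`: `1` if `j ≡ -i, -i+1 (mod 2m)`, `-1` if `j ≡ i, i+1 (mod 2m)`,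
`0` otherwise (and `0` when `m ∣ i`, a case excluded in all uses). -/
def deltaLO (m i j : ℕ) : ℤ :=
  if m ∣ i then 0
  else if 2 * m ∣ (i + j) ∨ 2 * m ∣ (i + j - 1) then 1
  else if (2 * (m : ℤ)) ∣ ((j : ℤ) - (i : ℤ)) ∨ (2 * (m : ℤ)) ∣ ((j : ℤ) - (i : ℤ) - 1) then -1
  else 0

/-- `γ_{i,m} = 1` if `i ≡ 1, …, m-1 (mod 2m)` and `-1` otherwise. -/
def gamLO (m i : ℕ) : ℤ :=
  if 1 ≤ i % (2 * m) ∧ i % (2 * m) ≤ m - 1 then 1 else -1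

/-- `β_{i,m} = 1` if `i ≡ 1, …, m-1 (mod 2m)`, `-1` if `i ≡ m+1, …, 2m-1 (mod 2m)`,
and `0` if `m ∣ i`. -/
def betLO (m i : ℕ) : ℤ :=
  if 1 ≤ i % (2 * m) ∧ i % (2 * m) ≤ m - 1 then 1
  else if m + 1 ≤ i % (2 * m) ∧ i % (2 * m) ≤ 2 * m - 1 then -1
  else 0

/-- Extend a tuple `f : Fin P → Fin N` to `n : ℕ → ℕ` with `n i = f (i-1)` for
`1 ≤ i ≤ P` and `n i = 0` otherwise (in particular `n 0 = 0`). -/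
def extTup (P N : ℕ) (f : Fin P → Fin N) : ℕ → ℕ :=
  fun i => if h : 1 ≤ i ∧ i ≤ P then (f ⟨i - 1, by omega⟩ : ℕ) else 0

/-- Takata's exponent `a(n)` (an integer; every integer division below is exact). -/
def aT (l t : ℕ) (n : ℕ → ℕ) : ℤ :=
  -(∑ j ∈ Icc 1 ((l - 1) / 2), (∑ k ∈ Icc (rpT l t j) ((l - 1) / 2),
      (sigmaT l t (iT l t k) + sigmaT l t (iT l t ((l - 1) / 2 + 1 - k))) / 2) *
      ((n j : ℤ) - (n (j - 1) : ℤ)))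
  - ∑ j ∈ Icc 1 ((l - 1) / 2 - 1), ((sigmaT l t (j + 1) + sigmaT l t ((l - 1) / 2 + 1 - j)) / 2) * (n j : ℤ)
  - ((sigmaT l t ((l - 1) / 2) + 1) / 2) * (n ((l - 1) / 2) : ℤ)
  - ∑ j ∈ Icc 1 ((l - 1) / 2), sigmaT l t j

/-- Takata's exponent `b₁(n)` (an integer; every integer division below is exact
whenever the factor it multiplies is nonzero). -/
def b1T (l t : ℕ) (n : ℕ → ℕ) : ℤ :=
  -aT l t n
  + ∑ k ∈ Icc 1 ((l - t) / 2), ((1 - sigmaT l t (iT l t k)) / 2) * (n (iT l t k - 1) : ℤ)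
  - ∑ k ∈ Icc ((l - t) / 2 + 1) ((l - 1) / 2), (n (iT l t k - 1) : ℤ)
  + ∑ k ∈ Icc ((l - t) / 2 + 1) ((l - 1) / 2), ((1 + sigmaT l t (iT l t k)) / 2) * (n (iT l t k) : ℤ)
  - (1 + sigmaT l t ((l - 1) / 2)) * (n ((l - 1) / 2) : ℤ)
  + ∑ j ∈ Icc 1 ((l - 1) / 2 - 1), ((sigmaT l t (j + 1) - sigmaT l t j) / 2) * (n j : ℤ)
  - ∑ k ∈ Icc 1 ((l - 1) / 2 - 1), ∑ k' ∈ Icc (k + 1) ((l - 1) / 2),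
      ((1 + Int.sign ((iT l t k : ℤ) - (iT l t k' : ℤ))) / 2) *
        ((sigmaT l t (iT l t k) - sigmaT l t (iT l t k')) / 2) *
        ((n (iT l t k) : ℤ) - (n (iT l t k - 1) : ℤ)) *
        ((n (iT l t k') : ℤ) - (n (iT l t k' - 1) : ℤ))
  + ∑ j ∈ Icc 1 ((l - 1) / 2), sigmaT l t j *
      (∑ k ∈ Icc 1 (rpT l t j), ((n (iT l t k) : ℤ) - (n (iT l t k - 1) : ℤ))) * (n (j - 1) : ℤ)

/-- Takata's exponent `b₂(n)`. -/
def b2T (l t : ℕ) (n : ℕ → ℕ) : ℤ :=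
  if l < 2 * t then
    ∑ k ∈ Icc ((l - t) / 2 + 1) ((t - 1) / 2),
      ((1 + sigmaT l t (iT l t k)) / 2) * (n (iT l t k - 1) : ℤ)
  else
    -∑ k ∈ Icc ((t + 1) / 2 + 1) ((l - t) / 2),
      ((1 + sigmaT l t (iT l t k)) / 2) * (n (iT l t k - 1) : ℤ)

/-- Takata's `κ(p')`. -/
def kapT (l t N : ℕ) (n : ℕ → ℕ) : ℤ :=
  if sigmaT l t ((l - 1) / 2) = -1 then -(N : ℤ) * (n ((l - 1) / 2) : ℤ) else 0

/-- Takata's `τ(j)`. -/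
def tauT (l t : ℕ) (q : ℂ) (n : ℕ → ℕ) (j : ℕ) : ℂ :=
  if sigmaT l t j = -1 then (-1 : ℂ) ^ (n j - n (j - 1))
  else q ^ ((((n j : ℤ) - (n (j - 1) : ℤ)) * (((n j : ℤ) - (n (j - 1) : ℤ)) + 1)) / 2)

/-- Takata's `X(n)`. -/
def XT (l t N : ℕ) (q : ℂ) (n : ℕ → ℕ) : ℂ :=
  (-1 : ℂ) ^ (n ((l - 1) / 2)) * q ^ kapT l t N n *
    (qPoch q q (N - 1) * qPoch q q (n ((l - 1) / 2)) / qPoch q q (N - n ((l - 1) / 2) - 1)) *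
    ∏ j ∈ Icc 1 ((l - 1) / 2), tauT l t q n j / qPoch q q (n j - n (j - 1))

/-- `(X; X)_n` as an integer polynomial. -/
def pochPoly (n : ℕ) : Polynomial ℤ := ∏ k ∈ range n, (1 - Polynomial.X ^ (k + 1))

lemma pochPoly_succ (n : ℕ) :
    pochPoly (n + 1) = pochPoly n * (1 - Polynomial.X ^ (n + 1)) :=
  prod_range_succ _ _

lemma pochPoly_ne_zero (n : ℕ) : pochPoly n ≠ 0 := by
  refine prod_ne_zero_iff.2 fun k _ h => ?_
  have := congrArg (Polynomial.eval 0) h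
  simp at this

lemma gaussPoly_zero_right (n : ℕ) : gaussPoly n 0 = 1 := by
  cases n <;> rfl

lemma gaussPoly_succ_succ (n k : ℕ) :
    gaussPoly (n + 1) (k + 1) = gaussPoly n k + Polynomial.X ^ (k + 1) * gaussPoly n (k + 1) :=
  rfl

lemma gaussPoly_eq_zero_of_lt {n k : ℕ} (h : n < k) : gaussPoly n k = 0 := by
  induction n generalizing k with
  | zero => obtain ⟨k, rfl⟩ : ∃ j, k = j + 1 := ⟨k - 1, by omega⟩; rfl
  | succ n ih =>
    obtain ⟨k, rfl⟩ : ∃ j, k = j + 1 := ⟨k - 1, by omega⟩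
    rw [gaussPoly_succ_succ, ih (by omega), ih (by omega), mul_zero, add_zero]

lemma gaussPoly_self (n : ℕ) : gaussPoly n n = 1 := by
  induction n with
  | zero => rfl
  | succ n ih => rw [gaussPoly_succ_succ, ih, gaussPoly_eq_zero_of_lt (by omega)]; simp

lemma gaussPoly_mul_pochPoly (j k : ℕ) :
    gaussPoly (j + k) k * pochPoly k * pochPoly j = pochPoly (j + k) := by
  induction j generalizing k with
  | zero => simp [gaussPoly_self, pochPoly]
  | succ j ihj =>
    induction k with
    | zero => simp [gaussPoly_zero_right, pochPoly]
    | succ k ihk =>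
      have h1 := ihj (k + 1)
      rw [show j + (k + 1) = j + 1 + k by ring] at h1
      rw [← add_assoc, gaussPoly_succ_succ, pochPoly_succ (j + 1 + k)]
      rw [pochPoly_succ j, pochPoly_succ k] at *
      rw [show (Polynomial.X : Polynomial ℤ) ^ (j + 1 + k + 1)
        = Polynomial.X ^ (k + 1) * Polynomial.X ^ (j + 1) by ring]
      linear_combination (1 - Polynomial.X ^ (k + 1)) * ihk
        + Polynomial.X ^ (k + 1) * (1 - Polynomial.X ^ (j + 1)) * h1

lemma gaussPoly_symm (j k : ℕ) : gaussPoly (j + k) k = gaussPoly (j + k) j := by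
  have h1 := gaussPoly_mul_pochPoly j k
  have h2 := gaussPoly_mul_pochPoly k j
  rw [add_comm k j] at h2
  refine mul_right_cancel₀ (mul_ne_zero (pochPoly_ne_zero k) (pochPoly_ne_zero j)) ?_
  linear_combination h1 - h2

lemma gaussPoly_mul_gaussPoly (i j l : ℕ) :
    gaussPoly (i + l + j) (l + j) * gaussPoly (l + j) j
      = gaussPoly (i + l + j) j * gaussPoly (i + l) l := by
  have h1 := gaussPoly_mul_pochPoly i (l + j)
  have h2 := gaussPoly_mul_pochPoly l j
  have h3 := gaussPoly_mul_pochPoly (i + l) j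
  have h4 := gaussPoly_mul_pochPoly i l
  rw [← add_assoc] at h1
  refine mul_right_cancel₀ (mul_ne_zero (mul_ne_zero (pochPoly_ne_zero i) (pochPoly_ne_zero j))
    (pochPoly_ne_zero l)) ?_
  linear_combination gaussPoly (i + l + j) (l + j) * pochPoly i * h2 + h1 - h3
    - gaussPoly (i + l + j) j * pochPoly j * h4

section GaussianBinomial

variable (q : ℂ)

lemma aeval_pochPoly (n : ℕ) : Polynomial.aeval q (pochPoly n) = qPoch q q n := by
  simp [pochPoly, qPoch, pow_succ']

lemma gbin_zero_right (n : ℕ) : gbin q n 0 = 1 := by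
  simp [gbin, gaussPoly_zero_right]

lemma gbin_succ_succ (n k : ℕ) :
    gbin q (n + 1) (k + 1) = gbin q n k + q ^ (k + 1) * gbin q n (k + 1) := by
  simp [gbin, gaussPoly_succ_succ]

lemma gbin_eq_zero_of_lt {n k : ℕ} (h : n < k) : gbin q n k = 0 := by
  simp [gbin, gaussPoly_eq_zero_of_lt h]

lemma gbin_self (n : ℕ) : gbin q n n = 1 := by
  simp [gbin, gaussPoly_self]

lemma gbin_mul_qPoch (j k : ℕ) :
    gbin q (j + k) k * qPoch q q k * qPoch q q j = qPoch q q (j + k) := by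
  simp only [← aeval_pochPoly, gbin, ← map_mul, gaussPoly_mul_pochPoly]

lemma gbin_symm (j k : ℕ) : gbin q (j + k) k = gbin q (j + k) j := by
  rw [gbin, gaussPoly_symm, gbin]

lemma gbin_mul_gbin (i j l : ℕ) :
    gbin q (i + l + j) (l + j) * gbin q (l + j) j = gbin q (i + l + j) j * gbin q (i + l) l := by
  simp only [gbin, ← map_mul, gaussPoly_mul_gaussPoly]

/-- The other `q`-Pascal rule. -/
lemma gbin_succ_succ' (j k : ℕ) :
    gbin q (j + k + 1) (k + 1) = q ^ j * gbin q (j + k) k + gbin q (j + k) (k + 1) := by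
  cases j with
  | zero => simp [gbin_self, gbin_eq_zero_of_lt]
  | succ j =>
    have h1 := gbin_symm q (j + 1) (k + 1)
    have h2 := gbin_symm q (j + 1) k
    have h3 := gbin_symm q j (k + 1)
    rw [← add_assoc] at h1
    rw [show j + (k + 1) = j + 1 + k by ring] at h3
    rw [h1, h2, h3, show j + 1 + k + 1 = (j + 1 + k) + 1 by ring, gbin_succ_succ]
    ring

lemma qPoch_succ' (x : ℂ) (n : ℕ) : qPoch x q (n + 1) = (1 - x) * qPoch (x * q) q n := by
  rw [qPoch, prod_range_succ', qPoch, mul_comm]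
  simp only [pow_zero, mul_one, pow_succ']
  congr 1
  exact prod_congr rfl fun k _ => by ring

lemma qPoch_succ (x : ℂ) (n : ℕ) : qPoch x q (n + 1) = qPoch x q n * (1 - x * q ^ n) :=
  prod_range_succ _ _

/-- The `q`-binomial theorem. -/
lemma sum_gbin_eq_qPoch (x : ℂ) (n : ℕ) :
    ∑ k ∈ range (n + 1), (-1) ^ k * q ^ ((k + 1).choose 2) * x ^ k * gbin q n k
      = qPoch (x * q) q n := by
  induction n generalizing x with
  | zero => simp [gbin_zero_right, qPoch]
  | succ n ih =>
    rw [qPoch_succ', ← ih (x * q), sum_range_succ']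
    simp only [gbin_succ_succ, gbin_zero_right]
    have e : ∀ k : ℕ, (k + 1 + 1).choose 2 = (k + 1).choose 2 + (k + 1) := fun k => by
      rw [Nat.choose_succ_succ' (k + 1) 1, Nat.choose_one_right, add_comm]
    have h := sum_range_succ'
      (fun k => (-1) ^ k * q ^ ((k + 1).choose 2) * (x * q) ^ k * gbin q n k)
      (n + 1)
    rw [sum_range_succ, gbin_eq_zero_of_lt q (Nat.lt_succ_self n), mul_zero, add_zero] at h
    rw [sub_mul, one_mul]
    nth_rewrite 1 [h]
    rw [mul_sum, add_sub_right_comm, ← sum_sub_distrib]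
    simp only [gbin_zero_right, mul_one, pow_zero]
    congr 1
    refine sum_congr rfl fun k _ => ?_
    rw [e]
    ring

/-- The `q`-Vandermonde identity. -/
lemma gbin_add (m n k : ℕ) :
    gbin q (m + n) k
      = ∑ i ∈ range (k + 1), q ^ ((m - i) * (k - i)) * gbin q m i * gbin q n (k - i) := by
  rw [← Nat.sum_antidiagonal_eq_sum_range_succ
    (fun i j => q ^ ((m - i) * j) * gbin q m i * gbin q n j)]
  induction m generalizing k with
  | zero =>
    cases k with
    | zero => simp [gbin_zero_right]
    | succ k =>
      rw [Nat.sum_antidiagonal_succ, sum_eq_zero]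
      · simp [gbin_zero_right]
      · intro p _; simp [gbin_eq_zero_of_lt]
  | succ m ih =>
    cases k with
    | zero => simp [gbin_zero_right]
    | succ k =>
      rw [show m + 1 + n = m + n + 1 by ring, gbin_succ_succ, ih, ih, Nat.sum_antidiagonal_succ,
        Nat.sum_antidiagonal_succ]
      simp only [gbin_succ_succ, gbin_zero_right, mul_add, add_mul, sum_add_distrib, mul_sum]
      rw [add_left_comm]
      congr 1
      · simp only [Nat.sub_zero]; ring
      congr 1
      · exact sum_congr rfl fun p _ => by simp
      refine sum_congr rfl fun p hp => ?_
      rw [HasAntidiagonal.mem_antidiagonal] at hp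
      rcases lt_or_ge m (p.1 + 1) with h | h
      · simp [gbin_eq_zero_of_lt q h]
      · obtain ⟨c, rfl⟩ := Nat.exists_eq_add_of_le h
        rw [show p.1 + 1 + c + 1 - (p.1 + 1) = c + 1 by omega,
          show p.1 + 1 + c - (p.1 + 1) = c by omega, ← hp]
        ring

lemma sum_gbin_mul_gbin_add (M u i : ℕ) :
    ∑ r ∈ range (M + 1), q ^ (r * (i + r)) * gbin q M r * gbin q u (i + r)
      = gbin q (M + u) (M + i) := by
  rw [gbin_add, show M + i + 1 = (M + 1) + i by ring, sum_range_add _ (M + 1) i]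
  rw [sum_eq_zero (s := range i) fun x _ => by
    simp [gbin_eq_zero_of_lt q (show M < M + 1 + x by omega)]]
  rw [add_zero, ← sum_range_reflect]
  refine sum_congr rfl fun r hr => ?_
  have hr' : r ≤ M := by simpa [Nat.lt_succ_iff] using hr
  obtain ⟨c, rfl⟩ := Nat.exists_eq_add_of_le hr'
  have h := gbin_symm q r c
  rw [show r + c + 1 - 1 - r = c by omega, show r + c - r = c by omega,
    show r + c + i - r = i + c by omega, h]

/-- The `q`-Pfaff–Saalschütz identity. -/
lemma gbin_saalschutz (u s w : ℕ) :
    ∑ t ∈ range (u + 1), q ^ ((u - t) * (s - t)) * gbin q u t * gbin q s t * gbin q (w + t) (u + s)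
      = gbin q w u * gbin q w s := by
  rcases lt_or_ge w s with hws | hsw
  · rw [gbin_eq_zero_of_lt q hws, mul_zero]
    refine sum_eq_zero fun t ht => ?_
    rw [mem_range] at ht
    rw [gbin_eq_zero_of_lt q (show w + t < u + s by omega), mul_zero]
  have hV : gbin q w u
      = ∑ i ∈ range (u + 1), q ^ ((s - i) * (u - i)) * gbin q s i * gbin q (w - s) (u - i) := by
    rw [← gbin_add, Nat.add_sub_cancel' hsw]
  have h1 : ∀ t ∈ range (u + 1),
      q ^ ((u - t) * (s - t)) * gbin q u t * gbin q s t * gbin q (w + t) (u + s)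
      = ∑ i ∈ range (u + 1), q ^ ((u - t) * (s - t)) * gbin q u t * gbin q s t *
        (q ^ ((t - i) * (u + s - i)) * gbin q t i * gbin q w (u + s - i)) := by
    intro t ht
    rw [← mul_sum]
    rcases lt_or_ge s t with hst | hts
    · simp [gbin_eq_zero_of_lt q hst]
    congr 1
    rw [add_comm, gbin_add, show u + s + 1 = u + 1 + s by ring, sum_range_add]
    rw [sum_eq_zero (s := range s), add_zero]
    intro x _
    rw [mem_range] at ht
    rw [gbin_eq_zero_of_lt q (show t < u + 1 + x by omega), mul_zero, zero_mul]
  rw [sum_congr rfl h1, sum_comm, hV, sum_mul]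
  refine sum_congr rfl fun i hi => ?_
  have hiu : i ≤ u := by simpa [Nat.lt_succ_iff] using hi
  rcases lt_or_ge s i with hsi | his
  · rw [gbin_eq_zero_of_lt q hsi, mul_zero, zero_mul, zero_mul]
    refine sum_eq_zero fun t _ => ?_
    rcases lt_or_ge t i with h | h
    · simp [gbin_eq_zero_of_lt q h]
    · simp [gbin_eq_zero_of_lt q (show s < t by omega)]
  obtain ⟨c, rfl⟩ := Nat.exists_eq_add_of_le his
  obtain ⟨d, rfl⟩ := Nat.exists_eq_add_of_le hiu
  rw [show i + d + 1 = i + (d + 1) by ring, sum_range_add]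
  rw [sum_eq_zero (s := range i) fun t ht => by simp [gbin_eq_zero_of_lt q (mem_range.1 ht)],
    zero_add]
  have h2 : ∀ r ∈ range (d + 1),
      q ^ ((i + d - (i + r)) * (i + c - (i + r))) * gbin q (i + d) (i + r) *
        gbin q (i + c) (i + r) * (q ^ ((i + r - i) * (i + d + (i + c) - i)) * gbin q (i + r) i *
          gbin q w (i + d + (i + c) - i))
      = q ^ (c * d) * gbin q (i + c) i * gbin q w (i + c + d) *
        (q ^ (r * (i + r)) * gbin q c r * gbin q (i + d) (i + r)) := by
    intro r hr
    rw [mem_range] at hr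
    rcases lt_or_ge c r with h | h
    · simp [gbin_eq_zero_of_lt q h, gbin_eq_zero_of_lt q (show i + c < i + r by omega)]
    obtain ⟨e, rfl⟩ := Nat.exists_eq_add_of_le h
    obtain ⟨f, rfl⟩ := Nat.exists_eq_add_of_le (Nat.lt_succ_iff.1 hr)
    have h3 := gbin_mul_gbin q e i r
    rw [show e + r + i = i + (r + e) by ring, show r + i = i + r by ring,
      show e + r = r + e by ring] at h3
    rw [show i + (r + f) - (i + r) = f by omega, show i + (r + e) - (i + r) = e by omega,
      show i + r - i = r by omega,
      show i + (r + f) + (i + (r + e)) - i = i + (r + e) + (r + f) by omega]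
    linear_combination q ^ (f * e) * gbin q (i + (r + f)) (i + r) *
      q ^ (r * (i + (r + e) + (r + f))) * gbin q w (i + (r + e) + (r + f)) * h3
  rw [sum_congr rfl h2, ← mul_sum]
  have h4 : ∑ r ∈ range (d + 1), q ^ (r * (i + r)) * gbin q c r * gbin q (i + d) (i + r)
      = gbin q (c + (i + d)) (c + i) := by
    rw [← sum_gbin_mul_gbin_add]
    rcases le_total c d with h | h
    · obtain ⟨e, rfl⟩ := Nat.exists_eq_add_of_le h
      rw [show c + e + 1 = c + 1 + e by ring, sum_range_add, add_eq_left]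
      exact sum_eq_zero fun x _ => by simp [gbin_eq_zero_of_lt q (show c < c + 1 + x by omega)]
    · obtain ⟨e, rfl⟩ := Nat.exists_eq_add_of_le h
      rw [show d + e + 1 = d + 1 + e by ring, sum_range_add _ (d + 1) e, left_eq_add]
      exact sum_eq_zero fun x _ => by
        simp [gbin_eq_zero_of_lt q (show i + d < i + (d + 1 + x) by omega)]
  rw [h4, show i + d - i = d by omega, show i + c - i = c by omega]
  rcases lt_or_ge (w - (i + c)) d with h | h
  · rw [gbin_eq_zero_of_lt q h, gbin_eq_zero_of_lt q (show w < i + c + d by omega)]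
    ring
  · obtain ⟨e, he⟩ := Nat.exists_eq_add_of_le h
    have h5 := gbin_mul_gbin q e (i + c) d
    rw [show e + d + (i + c) = w by omega, show e + d = w - (i + c) by omega] at h5
    rw [show c + (i + d) = d + (i + c) by ring, show c + i = i + c by ring,
      show i + c + d = d + (i + c) by ring]
    linear_combination q ^ (c * d) * gbin q (i + c) i * h5

end GaussianBinomial

lemma gbin_eq_pow_mul_gbin_inv {q : ℂ} (hq : q ≠ 0) (j k : ℕ) :
    gbin q (j + k) k = q ^ (k * j) * gbin q⁻¹ (j + k) k := by
  induction j generalizing k with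
  | zero => simp [gbin_self]
  | succ j ihj =>
    induction k with
    | zero => simp [gbin_zero_right]
    | succ k ihk =>
      have h1 := ihj (k + 1)
      rw [show j + (k + 1) = j + 1 + k by ring] at h1
      rw [← add_assoc, gbin_succ_succ, ihk, h1, gbin_succ_succ']
      rw [show (k + 1) * (j + 1) = k * (j + 1) + (j + 1) by ring, pow_add q (k * (j + 1)) (j + 1),
        inv_pow]
      have h2 : q ^ (j + 1) * (q ^ (j + 1))⁻¹ = 1 := mul_inv_cancel₀ (pow_ne_zero _ hq)
      linear_combination - q ^ (k * (j + 1)) * gbin q⁻¹ (j + 1 + k) k * h2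

lemma gbin_mul_qPoch_eq_qPoch (q : ℂ) (j k : ℕ) :
    gbin q (j + k) k * qPoch q q j = qPoch (q ^ (k + 1)) q j := by
  have h : gaussPoly (j + k) k * pochPoly j
      = ∏ i ∈ range j, (1 - (Polynomial.X : Polynomial ℤ) ^ (k + i + 1)) := by
    refine mul_left_cancel₀ (pochPoly_ne_zero k) ?_
    have h2 : pochPoly (j + k) = pochPoly k * ∏ i ∈ range j, (1 - Polynomial.X ^ (k + i + 1)) := by
      rw [add_comm]
      exact prod_range_add _ k j
    rw [← h2, ← gaussPoly_mul_pochPoly]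
    ring
  have h3 := congrArg (Polynomial.aeval q) h
  rw [map_mul, aeval_pochPoly] at h3
  rw [gbin, h3, qPoch, map_prod]
  refine prod_congr rfl fun i _ => ?_
  simp only [map_sub, map_one, map_pow, Polynomial.aeval_X]
  ring

/-- Closed form of the sum over the variables inside a level with outer values `a ≤ b`. -/
def levelVal (q : ℂ) (a b t : ℕ) : ℂ :=
  (-1) ^ a * q ^ (((a + 1).choose 2 : ℤ) - a * ((a : ℤ) - t)) * gbin q b a *
    (gbin q (t + (b - a)) t * qPoch q q (b - a))

lemma choose_two_add (a j : ℕ) :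
    (a + j + 1).choose 2 = (a + 1).choose 2 + (j + 1).choose 2 + a * j := by
  induction j with
  | zero => simp
  | succ j ih =>
    rw [← add_assoc, Nat.choose_succ_succ' (a + j + 1) 1, ih, Nat.choose_succ_succ' (j + 1) 1]
    simp only [Nat.choose_one_right]
    ring

lemma sum_gbin_shift {q : ℂ} (hq : q ≠ 0) (a' M N : ℕ) (hN : a' + M < N) (g : ℕ → ℂ) (x : ℤ)
    (hlow : ∀ a < a', g a = 0) (hhigh : ∀ a, a' + M < a → g a = 0)
    (C : ℂ) (hg : ∀ j ≤ M, g (a' + j) = C * ((-1) ^ j * q ^ ((j + 1).choose 2) * (q ^ x) ^ j *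
      gbin q M j)) :
    ∑ a ∈ range N, g a = C * qPoch (q ^ (x + 1)) q M := by
  obtain ⟨e, rfl⟩ := Nat.exists_eq_add_of_lt hN
  rw [show a' + M + e + 1 = a' + ((M + 1) + e) by ring, sum_range_add _ a', sum_range_add _ (M + 1),
    sum_eq_zero fun a ha => hlow a (mem_range.1 ha), zero_add,
    sum_eq_zero (s := range e) fun a _ => hhigh _ (by omega), add_zero,
    sum_congr rfl fun j hj => hg j (Nat.lt_succ_iff.1 (mem_range.1 hj)), ← mul_sum,
    sum_gbin_eq_qPoch, zpow_add₀ hq, zpow_one]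

/-- The innermost sum, over the middle variable of a block. -/
lemma sum_middle {q : ℂ} (hq : q ≠ 0) (a b t N : ℕ) (hab : a ≤ b) (hb : b < N) :
    ∑ v ∈ range N, (-1) ^ v * q ^ (((v + 1).choose 2 : ℤ) - ((a : ℤ) - t) * v) *
      gbin q v a * gbin q b v = levelVal q a b t := by
  obtain ⟨M, rfl⟩ := Nat.exists_eq_add_of_le hab
  rw [sum_gbin_shift hq a M N hb _ t _ _
    ((-1) ^ a * q ^ (((a + 1).choose 2 : ℤ) - a * ((a : ℤ) - t)) * gbin q (a + M) a)]
  · rw [levelVal, show a + M - a = M by omega, show t + M = M + t by ring, gbin_mul_qPoch_eq_qPoch]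
    norm_cast
  · intro j hj
    obtain ⟨c, rfl⟩ := Nat.exists_eq_add_of_le hj
    have h := gbin_mul_gbin q c a j
    rw [show c + j + a = a + (j + c) by ring, show j + a = a + j by ring,
      show c + j = j + c by ring] at h
    have e : q ^ (((a + j + 1).choose 2 : ℤ) - ((a : ℤ) - t) * (a + j : ℕ))
        = q ^ (((a + 1).choose 2 : ℤ) - a * ((a : ℤ) - t)) *
          (q ^ ((j + 1).choose 2) * (q ^ (t : ℤ)) ^ j) := by
      rw [← zpow_natCast, ← zpow_natCast, ← zpow_mul, ← zpow_add₀ hq, ← zpow_add₀ hq,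
        choose_two_add]
      congr 1
      push_cast
      ring
    rw [e, pow_add]
    linear_combination (-1) ^ a * (-1) ^ j * q ^ (((a + 1).choose 2 : ℤ) - a * ((a : ℤ) - t)) *
          (q ^ ((j + 1).choose 2) * (q ^ (t : ℤ)) ^ j) * h
  · intro v hv; simp [gbin_eq_zero_of_lt q hv]
  · intro v hv; simp [gbin_eq_zero_of_lt q hv]

lemma sum_lower {q : ℂ} (hq : q ≠ 0) (a' b' t' t d N : ℕ) (hab : a' ≤ b') (hb : b' < N) :
    ∑ a ∈ range N, (-1) ^ a * q ^ (((a + 1).choose 2 : ℤ) - a * ((a : ℤ) - t)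
        - ((a' : ℤ) - t') * (a + d) + ((a : ℤ) - t) * (a + d) + t * ((a : ℤ) - a')) *
      (gbin q a a' * gbin q b' (a + d) * gbin q (a + d) a)
    = (-1) ^ a' * q ^ (((a' + 1).choose 2 : ℤ) - a' * ((a' : ℤ) - t') + ((t' : ℤ) - t) * d) *
      (gbin q b' a' * gbin q (b' - a') d) * qPoch (q ^ (t' + t + d + 1)) q (b' - a' - d) := by
  rcases lt_or_ge (b' - a') d with hd | hd
  · rw [gbin_eq_zero_of_lt q hd]
    simp only [mul_zero, zero_mul]
    refine sum_eq_zero fun a _ => ?_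
    rcases lt_or_ge a a' with h | h
    · simp [gbin_eq_zero_of_lt q h]
    · simp [gbin_eq_zero_of_lt q (show b' < a + d by omega)]
  obtain ⟨M, hM⟩ := Nat.exists_eq_add_of_le hd
  obtain rfl : b' = a' + d + M := by omega
  rw [sum_gbin_shift hq a' M N (by omega) _ (t' + t + d) _ _
    ((-1) ^ a' * q ^ (((a' + 1).choose 2 : ℤ) - a' * ((a' : ℤ) - t') + ((t' : ℤ) - t) * d) *
      (gbin q (a' + d + M) a' * gbin q (a' + d + M - a') d))]
  · rw [show a' + d + M - a' - d = M by omega]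
    norm_cast
  · intro j hj
    obtain ⟨c, rfl⟩ := Nat.exists_eq_add_of_le hj
    have h1 := gbin_mul_gbin q c (a' + j) d
    have h2 := gbin_mul_gbin q (c + d) a' j
    have h3 := gbin_mul_gbin q c j d
    have h8 := gbin_mul_gbin q c d j
    rw [show c + d + (a' + j) = a' + d + (j + c) by ring,
      show d + (a' + j) = a' + j + d by ring] at h1
    rw [show c + d + j + a' = a' + d + (j + c) by ring, show j + a' = a' + j by ring,
      show c + d + j = d + (j + c) by ring] at h2
    rw [show c + d + j = d + (j + c) by ring] at h3
    rw [show c + j + d = d + (j + c) by ring, show c + j = j + c by ring,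
      show j + d = d + j by ring] at h8
    have h9 : gbin q (d + j) d = gbin q (d + j) j := by
      rw [add_comm, gbin_symm, add_comm]
    have e : q ^ (((a' + j + 1).choose 2 : ℤ) - (a' + j : ℕ) * (((a' + j : ℕ) : ℤ) - t)
        - ((a' : ℤ) - t') * ((a' + j : ℕ) + d) + (((a' + j : ℕ) : ℤ) - t) * ((a' + j : ℕ) + d)
        + t * (((a' + j : ℕ) : ℤ) - a'))
        = q ^ (((a' + 1).choose 2 : ℤ) - a' * ((a' : ℤ) - t') + ((t' : ℤ) - t) * d) *
          (q ^ ((j + 1).choose 2) * (q ^ ((t' : ℤ) + t + d)) ^ j) := by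
      rw [← zpow_natCast, ← zpow_natCast, ← zpow_mul, ← zpow_add₀ hq, ← zpow_add₀ hq,
        choose_two_add]
      congr 1
      push_cast
      ring
    have h : gbin q (a' + j) a' * gbin q (a' + d + (j + c)) (a' + j + d) *
          gbin q (a' + j + d) (a' + j)
        = gbin q (a' + d + (j + c)) a' * gbin q (d + (j + c)) d * gbin q (j + c) j := by
      rw [mul_assoc, h1]
      linear_combination gbin q (c + d) d * h2 + gbin q (a' + d + (j + c)) a' *
        (h8 - h3 - gbin q (d + (j + c)) (d + j) * h9)
    rw [e, pow_add, h, show a' + d + (j + c) - a' = d + (j + c) by omega]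
    ring
  · intro v hv; simp [gbin_eq_zero_of_lt q hv]
  · intro v hv; simp [gbin_eq_zero_of_lt q (show a' + d + M < v + d by omega)]

/-- Summing out one level of a block. -/
lemma sum_level {q : ℂ} (hq : q ≠ 0) (a' b' t' s N : ℕ) (hab : a' ≤ b') (hb : b' < N) :
    ∑ t ∈ range (t' + 1), gbin q t' t * ∑ a ∈ range N, (if t ≤ s then
        q ^ (- ((a' : ℤ) - t') * (a + (s - t : ℕ)) + ((a : ℤ) - t) * (a + (s - t : ℕ))
          + t * ((a : ℤ) - a')) *
        gbin q a a' * gbin q b' (a + (s - t)) * levelVal q a (a + (s - t)) t else 0)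
    = levelVal q a' b' t' * gbin q (t' + (b' - a')) s := by
  have h1 : ∀ t ∈ range (t' + 1), gbin q t' t * ∑ a ∈ range N, (if t ≤ s then
        q ^ (- ((a' : ℤ) - t') * (a + (s - t : ℕ)) + ((a : ℤ) - t) * (a + (s - t : ℕ))
          + t * ((a : ℤ) - a')) *
        gbin q a a' * gbin q b' (a + (s - t)) * levelVal q a (a + (s - t)) t else 0)
      = (-1) ^ a' * q ^ (((a' + 1).choose 2 : ℤ) - a' * ((a' : ℤ) - t')) * gbin q b' a' *
        qPoch q q (b' - a') * (q ^ ((t' - t) * (s - t)) * gbin q t' t * gbin q s t *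
          gbin q (t' + (b' - a') + t) (t' + s)) := by
    intro t ht
    rcases lt_or_ge s t with hst | hts
    · simp [gbin_eq_zero_of_lt q hst, hst.not_ge]
    obtain ⟨d, rfl⟩ := Nat.exists_eq_add_of_le hts
    obtain ⟨c, rfl⟩ := Nat.exists_eq_add_of_le (Nat.lt_succ_iff.1 (mem_range.1 ht))
    simp only [hts, if_true, show t + d - t = d by omega, show t + c - t = c by omega]
    have h2 : ∀ a ∈ range N,
        q ^ (- ((a' : ℤ) - (t + c : ℕ)) * (a + d) + ((a : ℤ) - t) * (a + d) + t * ((a : ℤ) - a')) *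
          gbin q a a' * gbin q b' (a + d) * levelVal q a (a + d) t
        = (gbin q (t + d) t * qPoch q q d) * ((-1) ^ a * q ^ (((a + 1).choose 2 : ℤ) - a * ((a : ℤ) - t)
            - ((a' : ℤ) - (t + c : ℕ)) * (a + d) + ((a : ℤ) - t) * (a + d) + t * ((a : ℤ) - a')) *
          (gbin q a a' * gbin q b' (a + d) * gbin q (a + d) a)) := by
      intro a _
      rw [levelVal, show a + d - a = d by omega]
      rw [show ((a + 1).choose 2 : ℤ) - a * ((a : ℤ) - t)
            - ((a' : ℤ) - (t + c : ℕ)) * (a + d) + ((a : ℤ) - t) * (a + d) + t * ((a : ℤ) - a')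
          = (- ((a' : ℤ) - (t + c : ℕ)) * (a + d) + ((a : ℤ) - t) * (a + d) + t * ((a : ℤ) - a'))
            + (((a + 1).choose 2 : ℤ) - a * ((a : ℤ) - t)) by ring,
        zpow_add₀ hq _ (((a + 1).choose 2 : ℤ) - a * ((a : ℤ) - t))]
      ring
    rw [sum_congr rfl h2, ← mul_sum, sum_lower hq _ _ _ _ _ _ hab hb]
    rcases lt_or_ge (b' - a') d with hd | hd
    · rw [gbin_eq_zero_of_lt q hd,
        gbin_eq_zero_of_lt q (show t + c + (b' - a') + t < t + c + (t + d) by omega)]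
      ring
    obtain ⟨M, hM⟩ := Nat.exists_eq_add_of_le hd
    rw [hM, show d + M - d = M by omega, ← gbin_mul_qPoch_eq_qPoch,
      show M + (t + c + t + d) = t + c + (d + M) + t by ring,
      show t + c + t + d = t + c + (t + d) by ring, zpow_add₀ hq,
      show (((t + c : ℕ) : ℤ) - t) * d = ((c * d : ℕ) : ℤ) by push_cast; ring, zpow_natCast]
    have h3 := gbin_mul_qPoch q M d
    rw [show M + d = d + M by ring] at h3
    rw [← h3]
    ring
  rw [sum_congr rfl h1, ← mul_sum, gbin_saalschutz, levelVal]
  ring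

lemma sum_pow_mul_qPoch_mul_gbin {q : ℂ} {N : ℕ} (hN : 0 < N) (hq : q ^ N = 1) (k : ℕ) :
    q ^ (k * (k + 1) + 1) * ∑ n ∈ range N, q ^ n * qPoch q q n * gbin q n k = qPoch q q k := by
  have hz : qPoch q q N = 0 := by
    obtain ⟨M, rfl⟩ : ∃ M, N = M + 1 := ⟨N - 1, by omega⟩
    rw [qPoch_succ, ← pow_succ', hq]
    simp
  induction k with
  | zero =>
    have h := sum_range_sub (fun n => qPoch q q n) N
    rw [hz, sum_congr rfl (fun n _ => show qPoch q q (n + 1) - qPoch q q n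
      = - q * (q ^ n * qPoch q q n) by rw [qPoch_succ]; ring), ← mul_sum] at h
    simp only [gbin_zero_right, mul_one]
    simp only [qPoch, range_zero, prod_empty] at h ⊢
    linear_combination -h
  | succ j ih =>
    have h := sum_range_sub (fun n => qPoch q q n * gbin q n (j + 1)) N
    rw [hz, gbin_eq_zero_of_lt q (Nat.succ_pos j)] at h
    have h2 : ∀ n ∈ range N, q ^ j * (qPoch q q (n + 1) * gbin q (n + 1) (j + 1)
          - qPoch q q n * gbin q n (j + 1))
        = (1 - q ^ (j + 1)) * (q ^ n * qPoch q q n * gbin q n j)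
          - q ^ (2 * (j + 1)) * (q ^ n * qPoch q q n * gbin q n (j + 1)) := by
      intro n _
      rw [qPoch_succ]
      rcases lt_or_ge n j with hnj | hjn
      · simp [gbin_succ_succ, gbin_eq_zero_of_lt q hnj,
          gbin_eq_zero_of_lt q (show n < j + 1 by omega)]
      obtain ⟨c, rfl⟩ := Nat.exists_eq_add_of_le hjn
      have e1 := gbin_succ_succ q (j + c) j
      have e2 := gbin_succ_succ' q c j
      rw [show c + j = j + c by ring] at e2
      rw [show gbin q (j + c + 1) (j + 1) = gbin q (j + c) j + q ^ (j + 1) * gbin q (j + c) (j + 1)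
        from e1] at *
      linear_combination q ^ j * qPoch q q (j + c) * e2
    have h3 := congrArg (q ^ j * ·) h
    simp only [mul_sum] at h3
    rw [sum_congr rfl h2, sum_sub_distrib, ← mul_sum, ← mul_sum] at h3
    rw [qPoch_succ, ← ih, ← pow_succ']
    linear_combination - q ^ (j * (j + 1) + 1) * h3

/-- Iterated sum over the values below `N` of the coordinates of `n` listed in `l`. -/
def msum (N : ℕ) : List ℕ → ((ℕ → ℕ) → ℂ) → (ℕ → ℕ) → ℂ
  | [], F, n => F n
  | i :: l, F, n => ∑ k ∈ range N, msum N l F (Function.update n i k)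

section IteratedSum

variable {N : ℕ}

lemma msum_cons (i : ℕ) (l : List ℕ) (F : (ℕ → ℕ) → ℂ) (n : ℕ → ℕ) :
    msum N (i :: l) F n = ∑ k ∈ range N, msum N l F (Function.update n i k) := rfl

lemma msum_append (l l' : List ℕ) (F : (ℕ → ℕ) → ℂ) (n : ℕ → ℕ) :
    msum N (l ++ l') F n = msum N l (msum N l' F) n := by
  induction l generalizing n with
  | nil => rfl
  | cons i l ih => exact sum_congr rfl fun k _ => ih _

lemma msum_perm {l l' : List ℕ} (h : l.Perm l') (F : (ℕ → ℕ) → ℂ) (n : ℕ → ℕ) :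
    msum N l F n = msum N l' F n := by
  induction h generalizing n with
  | nil => rfl
  | cons i _ ih => exact sum_congr rfl fun k _ => ih _
  | swap i j l =>
    rcases eq_or_ne i j with rfl | hij
    · rfl
    · simp only [msum_cons]
      rw [sum_comm]
      refine sum_congr rfl fun a _ => sum_congr rfl fun b _ => ?_
      rw [Function.update_comm hij]
  | trans _ _ ih1 ih2 => rw [ih1, ih2]

lemma msum_congr {l : List ℕ} {F F' : (ℕ → ℕ) → ℂ} {n : ℕ → ℕ}
    (h : ∀ n', (∀ j, j ∉ l → n' j = n j) → F n' = F' n') : msum N l F n = msum N l F' n := by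
  induction l generalizing n with
  | nil => exact h n fun _ _ => rfl
  | cons i l ih =>
    refine sum_congr rfl fun k _ => ih fun n' hn' => h n' fun j hj => ?_
    rw [List.mem_cons, not_or] at hj
    rw [hn' j hj.2, Function.update_of_ne hj.1]

lemma msum_sum_mul {ι : Type*} (s : Finset ι) (c : ι → ℂ) (l : List ℕ) (F : ι → (ℕ → ℕ) → ℂ)
    (n : ℕ → ℕ) :
    msum N l (fun n' => ∑ t ∈ s, c t * F t n') n = ∑ t ∈ s, c t * msum N l (F t) n := by
  induction l generalizing n with
  | nil => rfl
  | cons i l ih =>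
    simp only [msum_cons, ih, mul_sum]
    exact sum_comm

lemma msum_mul (c : ℂ) (l : List ℕ) (F : (ℕ → ℕ) → ℂ) (n : ℕ → ℕ) :
    msum N l (fun n' => c * F n') n = c * msum N l F n := by
  simpa using msum_sum_mul (N := N) (univ : Finset Unit) (fun _ => c) l (fun _ => F) n

lemma msum_comp_update {l : List ℕ} {j : ℕ} (hj : j ∉ l) (k : ℕ) (F : (ℕ → ℕ) → ℂ) (n : ℕ → ℕ) :
    msum N l (fun n' => F (Function.update n' j k)) n = msum N l F (Function.update n j k) := by
  induction l generalizing n with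
  | nil => rfl
  | cons i l ih =>
    rw [List.mem_cons, not_or] at hj
    simp only [msum_cons, ih hj.2]
    exact sum_congr rfl fun a _ => by rw [Function.update_comm hj.1]

/-- Nested sum over `s' ≥ s_i ≥ s_{i+1} ≥ ⋯` (with `r` summation variables). -/
def chainSum (q : ℂ) (x : ℕ → ℤ) : ℕ → ℕ → ℕ → ℂ
  | 0, _, _ => 1
  | r + 1, i, s' => ∑ s ∈ range (s' + 1), q ^ ((s : ℤ) ^ 2 + s + x i * s) * gbin q s' s *
      chainSum q x r (i + 1) s

lemma chainSum_zero_right (q : ℂ) (x : ℕ → ℤ) (r i : ℕ) : chainSum q x r i 0 = 1 := by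
  induction r generalizing i with
  | zero => rfl
  | succ r ih => simp [chainSum, gbin_zero_right, ih]

section Block

variable (q : ℂ) (o m : ℕ) (x : ℕ → ℤ)

/-- Indices of the variables in the levels `i, …, i + r - 1` and in the middle of the block which
starts at `o`. -/
def levelList : ℕ → ℕ → List ℕ
  | 0, _ => [o + m]
  | r + 1, i => (o + 2 * m - i) :: (o + i) :: levelList r (i + 1)

lemma mem_levelList {r i j : ℕ} (h : i + r = m) :
    j ∈ levelList o m r i ↔ o + i ≤ j ∧ j ≤ o + 2 * m - i := by
  induction r generalizing i with
  | zero => simp only [levelList, List.mem_singleton]; omega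
  | succ r ih =>
    simp only [levelList, List.mem_cons, ih (show i + 1 + r = m by omega)]
    omega

lemma nodup_levelList {r i : ℕ} (h : i + r = m) : (levelList o m r i).Nodup := by
  induction r generalizing i with
  | zero => simp [levelList]
  | succ r ih =>
    simp only [levelList, List.nodup_cons, List.mem_cons,
      mem_levelList o m (show i + 1 + r = m by omega)]
    exact ⟨by omega, by omega, ih (by omega)⟩

/-- The weight of the levels `i, …, i + r - 1` and the middle of a block, after summation over the
auxiliary chain `t' ≥ t_i ≥ t_{i+1} ≥ ⋯`. -/
def levelSum : ℕ → ℕ → ℕ → (ℕ → ℕ) → ℂ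
  | 0, i, t', n => (-1) ^ n (o + m) *
      q ^ (((n (o + m) + 1).choose 2 : ℤ) - ((n (o + (i - 1)) : ℤ) - t') * n (o + m)) *
      gbin q (n (o + m)) (n (o + (i - 1))) * gbin q (n (o + 2 * m - (i - 1))) (n (o + m))
  | r + 1, i, t', n => ∑ t ∈ range (t' + 1),
      (q ^ (-((n (o + (i - 1)) : ℤ) - t') * n (o + 2 * m - i) +
        ((n (o + i) : ℤ) - t) * n (o + 2 * m - i) + t * ((n (o + i) : ℤ) - n (o + (i - 1)))) *
      (gbin q (n (o + i)) (n (o + (i - 1))) *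
        gbin q (n (o + 2 * m - (i - 1))) (n (o + 2 * m - i)) * gbin q t' t) *
      q ^ (((t : ℤ) + n (o + 2 * m - i) - n (o + i)) ^ 2 + (t + n (o + 2 * m - i) - n (o + i)) +
        x i * (t + n (o + 2 * m - i) - n (o + i)))) * levelSum r (i + 1) t n

lemma sum_middle' {q : ℂ} (hq : q ≠ 0) (a b t N : ℕ) (hb : b < N) :
    ∑ v ∈ range N, (-1) ^ v * q ^ (((v + 1).choose 2 : ℤ) - ((a : ℤ) - t) * v) *
      gbin q v a * gbin q b v = levelVal q a b t := by
  rcases lt_or_ge b a with h | h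
  · rw [levelVal, gbin_eq_zero_of_lt q h, mul_zero, zero_mul]
    refine sum_eq_zero fun v _ => ?_
    rcases lt_or_ge v a with h' | h'
    · simp [gbin_eq_zero_of_lt q h']
    · simp [gbin_eq_zero_of_lt q (show b < v by omega)]
  · exact sum_middle hq a b t N h hb

lemma sum_level' {q : ℂ} (hq : q ≠ 0) (a' b' t' N : ℕ) (hb : b' < N) (h : ℕ → ℂ) :
    ∑ b ∈ range N, ∑ a ∈ range N, ∑ t ∈ range (t' + 1),
      q ^ (-((a' : ℤ) - t') * b + ((a : ℤ) - t) * b + t * ((a : ℤ) - a')) *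
      (gbin q a a' * gbin q b' b * gbin q t' t) * (levelVal q a b t * h (t + (b - a)))
    = levelVal q a' b' t' * ∑ s ∈ range (t' + (b' - a') + 1), h s * gbin q (t' + (b' - a')) s := by
  rcases lt_or_ge b' a' with hab | hab
  · rw [levelVal, gbin_eq_zero_of_lt q hab, mul_zero, zero_mul, zero_mul]
    refine sum_eq_zero fun b _ => sum_eq_zero fun a _ => sum_eq_zero fun t _ => ?_
    rcases lt_or_ge a a' with h1 | h1
    · simp [gbin_eq_zero_of_lt q h1]
    rcases lt_or_ge b' b with h2 | h2
    · simp [gbin_eq_zero_of_lt q h2]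
    · simp [levelVal, gbin_eq_zero_of_lt q (show b < a by omega)]
  rw [mul_sum]
  have e : ∀ s ∈ range (t' + (b' - a') + 1),
      levelVal q a' b' t' * (h s * gbin q (t' + (b' - a')) s)
      = ∑ t ∈ range (t' + 1), ∑ a ∈ range N, h s * (gbin q t' t * (if t ≤ s then
        q ^ (- ((a' : ℤ) - t') * (a + (s - t : ℕ)) + ((a : ℤ) - t) * (a + (s - t : ℕ))
          + t * ((a : ℤ) - a')) *
        gbin q a a' * gbin q b' (a + (s - t)) * levelVal q a (a + (s - t)) t else 0)) := by
    intro s _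
    simp only [← mul_sum]
    rw [sum_level hq a' b' t' s N hab hb]
    ring
  rw [sum_congr rfl e, sum_comm]
  have e2 : ∑ s ∈ range (t' + (b' - a') + 1), ∑ t ∈ range (t' + 1), ∑ a ∈ range N,
        h s * (gbin q t' t * (if t ≤ s then
        q ^ (- ((a' : ℤ) - t') * (a + (s - t : ℕ)) + ((a : ℤ) - t) * (a + (s - t : ℕ))
          + t * ((a : ℤ) - a')) *
        gbin q a a' * gbin q b' (a + (s - t)) * levelVal q a (a + (s - t)) t else 0))
      = ∑ a ∈ range N, ∑ t ∈ range (t' + 1), ∑ s ∈ range (t' + (b' - a') + 1),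
        h s * (gbin q t' t * (if t ≤ s then
        q ^ (- ((a' : ℤ) - t') * (a + (s - t : ℕ)) + ((a : ℤ) - t) * (a + (s - t : ℕ))
          + t * ((a : ℤ) - a')) *
        gbin q a a' * gbin q b' (a + (s - t)) * levelVal q a (a + (s - t)) t else 0)) := by
    rw [sum_comm, sum_congr rfl fun t _ => sum_comm, sum_comm]
  rw [e2]
  refine sum_congr rfl fun a _ => ?_
  rw [sum_comm]
  refine sum_congr rfl fun t ht => ?_
  rw [mem_range] at ht
  symm
  refine sum_bij_ne_zero (fun s _ _ => a + (s - t)) ?_ ?_ ?_ ?_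
  · intro s _ hs
    have : ¬ b' < a + (s - t) := fun hlt => hs (by simp [gbin_eq_zero_of_lt q hlt])
    rw [mem_range]
    omega
  · intro s _ hs s2 _ hs2 hss
    have h1 : t ≤ s := by by_contra hlt; exact hs (by simp [hlt])
    have h2 : t ≤ s2 := by by_contra hlt; exact hs2 (by simp [hlt])
    omega
  · intro b _ hb0
    have h1 : ¬ a < a' := fun hlt => hb0 (by simp [gbin_eq_zero_of_lt q hlt])
    have h2 : ¬ b' < b := fun hlt => hb0 (by simp [gbin_eq_zero_of_lt q hlt])
    have h3 : ¬ b < a := fun hlt => hb0 (by simp [levelVal, gbin_eq_zero_of_lt q hlt])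
    have h4 : a + (t + (b - a) - t) = b := by omega
    refine ⟨t + (b - a), by rw [mem_range]; omega, ?_, h4⟩
    have h5 : ((t + (b - a) - t : ℕ) : ℤ) = b - a := by omega
    intro h0
    apply hb0
    rw [if_pos (by omega), h4, h5] at h0
    rw [← h0]
    ring_nf
  · intro s _ hs
    have h1 : t ≤ s := by by_contra hlt; exact hs (by simp [hlt])
    rw [if_pos h1, show t + (a + (s - t) - a) = s by omega]
    push_cast
    ring

lemma msum_levelSum {q : ℂ} (hq : q ≠ 0) {r i : ℕ} (hi : 1 ≤ i) (h : i + r = m) (t' : ℕ)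
    (n : ℕ → ℕ) (hn : n (o + 2 * m - (i - 1)) < N) :
    msum N (levelList o m r i) (levelSum q o m x r i t') n
      = levelVal q (n (o + (i - 1))) (n (o + 2 * m - (i - 1))) t' *
        chainSum q x r i (t' + (n (o + 2 * m - (i - 1)) - n (o + (i - 1)))) := by
  induction r generalizing i t' n with
  | zero =>
    simp only [levelList, msum, levelSum, chainSum, mul_one, Function.update_self]
    rw [← sum_middle' hq _ _ _ N hn]
    refine sum_congr rfl fun v _ => ?_
    rw [Function.update_of_ne (by omega), Function.update_of_ne (by omega)]
  | succ r ih =>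
    have hr : i + 1 + r = m := by omega
    set a' := n (o + (i - 1)) with ha'
    set b' := n (o + 2 * m - (i - 1)) with hb'
    have key : ∀ b ∈ range N, ∀ a ∈ range N,
        msum N (levelList o m r (i + 1)) (levelSum q o m x (r + 1) i t')
          (Function.update (Function.update n (o + 2 * m - i) b) (o + i) a)
        = ∑ t ∈ range (t' + 1),
          q ^ (-((a' : ℤ) - t') * b + ((a : ℤ) - t) * b + t * ((a : ℤ) - a')) *
          (gbin q a a' * gbin q b' b * gbin q t' t) * (levelVal q a b t *
            ((fun s : ℕ => q ^ ((s : ℤ) ^ 2 + s + x i * s) * chainSum q x r (i + 1) s)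
              (t + (b - a)))) := by
      intro b hb a _
      set n2 := Function.update (Function.update n (o + 2 * m - i) b) (o + i) a with hn2
      have va : n2 (o + i) = a := by simp [hn2]
      have vb : n2 (o + 2 * m - i) = b := by
        rw [hn2, Function.update_of_ne (by omega), Function.update_self]
      have va' : n2 (o + (i - 1)) = a' := by
        rw [hn2, Function.update_of_ne (by omega), Function.update_of_ne (by omega)]
      have vb' : n2 (o + 2 * m - (i - 1)) = b' := by
        rw [hn2, Function.update_of_ne (by omega), Function.update_of_ne (by omega)]
      rw [msum_congr (F' := fun n' => ∑ t ∈ range (t' + 1),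
        (q ^ (-((a' : ℤ) - t') * b + ((a : ℤ) - t) * b + t * ((a : ℤ) - a')) *
        (gbin q a a' * gbin q b' b * gbin q t' t) *
        q ^ (((t : ℤ) + b - a) ^ 2 + (t + b - a) + x i * (t + b - a))) *
          levelSum q o m x r (i + 1) t n')]
      · rw [msum_sum_mul]
        refine sum_congr rfl fun t _ => ?_
        rw [ih (by omega) hr t n2 (by
          rw [show i + 1 - 1 = i by omega, vb]; exact mem_range.1 hb)]
        rw [show i + 1 - 1 = i by omega, va, vb]
        rcases lt_or_ge b a with hlt | hge
        · simp [levelVal, gbin_eq_zero_of_lt q hlt]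
        · have : ((t + (b - a) : ℕ) : ℤ) = t + b - a := by omega
          simp only [this]
          ring
      · intro n' hn'
        have w : ∀ j, ¬ (o + (i + 1) ≤ j ∧ j ≤ o + 2 * m - (i + 1)) → n' j = n2 j := fun j hj =>
          hn' j (by rwa [mem_levelList o m hr])
        simp only [levelSum]
        rw [w (o + i) (by omega), w (o + 2 * m - i) (by omega), w (o + (i - 1)) (by omega),
          w (o + 2 * m - (i - 1)) (by omega), va, vb, va', vb']
    simp only [levelList, msum_cons]
    rw [sum_congr rfl fun b hb => sum_congr rfl fun a ha => key b hb a ha]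
    refine (sum_level' hq a' b' t' N hn
      (fun s : ℕ => q ^ ((s : ℤ) ^ 2 + s + x i * s) * chainSum q x r (i + 1) s)).trans ?_
    rw [chainSum]
    congr 1
    refine sum_congr rfl fun s _ => ?_
    ring

end Block

end IteratedSum

section Eps

variable {m : ℕ}

lemma epsLO_of_dvd {i : ℕ} (h : m ∣ i) (j : ℕ) : epsLO m i j = 0 := by
  simp [epsLO, h]

lemma epsLO_add_left {o : ℕ} (ho : 2 * m ∣ o) (i j : ℕ) : epsLO m (i + o) j = epsLO m i j := by
  obtain ⟨c, rfl⟩ := ho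
  have h1 : m ∣ i + 2 * m * c ↔ m ∣ i := Nat.dvd_add_left ⟨2 * c, by ring⟩
  have h2 : 2 * m ∣ i + 2 * m * c + j ↔ 2 * m ∣ i + j := by
    rw [add_right_comm]; exact Nat.dvd_add_left ⟨c, rfl⟩
  have h3 : 2 * m ∣ i + 2 * m * c + j + 1 ↔ 2 * m ∣ i + j + 1 := by
    rw [show i + 2 * m * c + j + 1 = i + j + 1 + 2 * m * c by ring]
    exact Nat.dvd_add_left ⟨c, rfl⟩
  have h4 : (2 * (m : ℤ)) ∣ (j : ℤ) - ((i + 2 * m * c : ℕ) : ℤ) ↔ (2 * (m : ℤ)) ∣ (j : ℤ) - i := by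
    rw [show (j : ℤ) - ((i + 2 * m * c : ℕ) : ℤ) = (j : ℤ) - i - 2 * m * c by push_cast; ring]
    exact (Int.dvd_iff_dvd_of_dvd_sub ⟨-c, by ring⟩)
  have h5 : (2 * (m : ℤ)) ∣ (j : ℤ) - ((i + 2 * m * c : ℕ) : ℤ) + 1
      ↔ (2 * (m : ℤ)) ∣ (j : ℤ) - i + 1 := by
    rw [show (j : ℤ) - ((i + 2 * m * c : ℕ) : ℤ) + 1 = (j : ℤ) - i + 1 - 2 * m * c by
      push_cast; ring]
    exact (Int.dvd_iff_dvd_of_dvd_sub ⟨-c, by ring⟩)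
  simp only [epsLO, h1, h2, h3, h4, h5]

lemma epsLO_add_right {o : ℕ} (ho : 2 * m ∣ o) (i j : ℕ) : epsLO m i (j + o) = epsLO m i j := by
  obtain ⟨c, rfl⟩ := ho
  have h2 : 2 * m ∣ i + (j + 2 * m * c) ↔ 2 * m ∣ i + j := by
    rw [← add_assoc]; exact Nat.dvd_add_left ⟨c, rfl⟩
  have h3 : 2 * m ∣ i + (j + 2 * m * c) + 1 ↔ 2 * m ∣ i + j + 1 := by
    rw [show i + (j + 2 * m * c) + 1 = i + j + 1 + 2 * m * c by ring]
    exact Nat.dvd_add_left ⟨c, rfl⟩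
  have h4 : (2 * (m : ℤ)) ∣ ((j + 2 * m * c : ℕ) : ℤ) - i ↔ (2 * (m : ℤ)) ∣ (j : ℤ) - i := by
    rw [show ((j + 2 * m * c : ℕ) : ℤ) - i = (j : ℤ) - i + 2 * m * c by push_cast; ring]
    exact Int.dvd_add_left ⟨c, rfl⟩
  have h5 : (2 * (m : ℤ)) ∣ ((j + 2 * m * c : ℕ) : ℤ) - i + 1
      ↔ (2 * (m : ℤ)) ∣ (j : ℤ) - i + 1 := by
    rw [show ((j + 2 * m * c : ℕ) : ℤ) - i + 1 = (j : ℤ) - i + 1 + 2 * m * c by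
      push_cast; ring]
    exact Int.dvd_add_left ⟨c, rfl⟩
  simp only [epsLO, h2, h3, h4, h5]

lemma two_mul_dvd_iff {x : ℕ} (h0 : 0 < x) (h : x < 4 * m) : 2 * m ∣ x ↔ x = 2 * m := by
  refine ⟨fun ⟨c, hc⟩ => ?_, fun h => h ▸ dvd_rfl⟩
  rcases c with _ | _ | c
  · omega
  · omega
  · nlinarith

lemma two_mul_dvd_int_iff {x : ℤ} (h0 : -(2 * m : ℤ) < x) (h : x < 2 * m) :
    (2 * (m : ℤ)) ∣ x ↔ x = 0 := by
  refine ⟨fun hd => Int.eq_zero_of_abs_lt_dvd hd (abs_lt.2 ⟨h0, h⟩), fun h => h ▸ dvd_zero _⟩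

lemma epsLO_eq {i j : ℕ} (hi : 1 ≤ i) (him : i < m) (hj : j < 2 * m) :
    epsLO m i j = (if j = 2 * m - i then 1 else 0) + (if j = 2 * m - 1 - i then 1 else 0)
      - (if j = i then 1 else 0) - (if j = i - 1 then 1 else 0) := by
  have h1 : ¬ m ∣ i := fun h => by have := Nat.le_of_dvd hi h; omega
  have h2 : 2 * m ∣ i + j ↔ i + j = 2 * m := two_mul_dvd_iff (by omega) (by omega)
  have h3 : 2 * m ∣ i + j + 1 ↔ i + j + 1 = 2 * m := two_mul_dvd_iff (by omega) (by omega)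
  have h4 : (2 * (m : ℤ)) ∣ (j : ℤ) - i ↔ (j : ℤ) - i = 0 :=
    two_mul_dvd_int_iff (by omega) (by omega)
  have h5 : (2 * (m : ℤ)) ∣ (j : ℤ) - i + 1 ↔ (j : ℤ) - i + 1 = 0 :=
    two_mul_dvd_int_iff (by omega) (by omega)
  simp only [epsLO, h1, h2, h3, h4, h5, if_false]
  split_ifs <;> omega

lemma epsLO_eq' {i j : ℕ} (hi : 1 ≤ i) (him : i < m) (hj : j < 2 * m) :
    epsLO m (2 * m - i) j = - epsLO m i j := by
  have h1 : ¬ m ∣ 2 * m - i := fun h => by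
    have := (Nat.dvd_sub_iff_right (show i ≤ 2 * m by omega) ⟨2, by ring⟩).1 h
    have := Nat.le_of_dvd hi this; omega
  have h2 : 2 * m ∣ 2 * m - i + j ↔ 2 * m - i + j = 2 * m :=
    two_mul_dvd_iff (by omega) (by omega)
  have h3 : 2 * m ∣ 2 * m - i + j + 1 ↔ 2 * m - i + j + 1 = 2 * m :=
    two_mul_dvd_iff (by omega) (by omega)
  have h4 : (2 * (m : ℤ)) ∣ (j : ℤ) - (2 * m - i : ℕ) ↔ (j : ℤ) - (2 * m - i : ℕ) = 0 :=
    two_mul_dvd_int_iff (by omega) (by omega)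
  have h5 : (2 * (m : ℤ)) ∣ (j : ℤ) - (2 * m - i : ℕ) + 1 ↔ (j : ℤ) - (2 * m - i : ℕ) + 1 = 0 :=
    two_mul_dvd_int_iff (by omega) (by omega)
  rw [epsLO_eq hi him hj]
  simp only [epsLO, h1, h2, h3, h4, h5, if_false]
  split_ifs <;> omega

/-- The exponent contributed to the variable with index `i` by the block starting at `o`. -/
def crossExp (m o : ℕ) (n : ℕ → ℕ) (i : ℕ) : ℤ := ∑ j ∈ range (2 * m), epsLO m i j * n (o + j)

lemma crossExp_eq (o : ℕ) (n : ℕ → ℕ) {i : ℕ} (hi : 1 ≤ i) (him : i < m) :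
    crossExp m o n i = n (o + (2 * m - i)) + n (o + (2 * m - 1 - i)) - n (o + i)
      - n (o + (i - 1)) := by
  rw [crossExp, sum_congr rfl fun j hj => by rw [epsLO_eq hi him (mem_range.1 hj)]]
  simp only [sub_mul, add_mul, ite_mul, one_mul, zero_mul, sum_sub_distrib, sum_add_distrib,
    sum_ite_eq', mem_range]
  rw [if_pos (by omega), if_pos (by omega), if_pos (by omega), if_pos (by omega)]

lemma sum_epsLO (o : ℕ) (n : ℕ → ℕ) {i : ℕ} (hi : 1 ≤ i) (him : i < m) :
    ∑ j ∈ Ico (i + 1) (2 * m), epsLO m i j * n (o + j)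
      = n (o + (2 * m - i)) + n (o + (2 * m - 1 - i)) := by
  rw [sum_congr rfl fun j hj => by rw [epsLO_eq hi him (mem_Ico.1 hj).2]]
  simp only [sub_mul, add_mul, ite_mul, one_mul, zero_mul, sum_sub_distrib, sum_add_distrib,
    sum_ite_eq', mem_Ico]
  rw [if_pos (by omega), if_pos (by omega), if_neg (by omega), if_neg (by omega)]
  ring

lemma sum_epsLO' (o : ℕ) (n : ℕ → ℕ) {i : ℕ} (him : i = 0 ∨ m ≤ i) (hi2 : i < 2 * m) :
    ∑ j ∈ Ico (i + 1) (2 * m), epsLO m i j * n (o + j) = 0 := by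
  refine sum_eq_zero fun j hj => ?_
  rw [mem_Ico] at hj
  rcases him with rfl | him
  · rw [epsLO_of_dvd (dvd_zero m), zero_mul]
  rcases him.eq_or_lt with rfl | him
  · rw [epsLO_of_dvd dvd_rfl, zero_mul]
  obtain ⟨i', rfl⟩ : ∃ i', i = 2 * m - i' := ⟨2 * m - i, by omega⟩
  rw [epsLO_eq' (by omega) (by omega) hj.2, epsLO_eq (by omega) (by omega) hj.2]
  rw [if_neg (by omega), if_neg (by omega), if_neg (by omega), if_neg (by omega)]
  simp

/-- Exponent patterns to which the summation of a block applies. -/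
structure GoodExp (m : ℕ) (y : ℕ → ℤ) : Prop where
  periodic : ∀ o, 2 * m ∣ o → ∀ i, y (i + o) = y i
  zero : y 0 = 0
  mid : y m = 0
  anti : ∀ i, 1 ≤ i → i < m → y (2 * m - i) = - y i

lemma GoodExp.add_crossExp {y : ℕ → ℤ} (hy : GoodExp m y) (o : ℕ) (n : ℕ → ℕ) :
    GoodExp m (y + crossExp m o n) where
  periodic o' ho' i := by
    simp only [Pi.add_apply, hy.periodic o' ho', crossExp, epsLO_add_left ho']
  zero := by simp [hy.zero, crossExp, epsLO_of_dvd]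
  mid := by simp [hy.mid, crossExp, epsLO_of_dvd]
  anti i hi him := by
    have : crossExp m o n (2 * m - i) = - crossExp m o n i := by
      rw [crossExp, crossExp, ← sum_neg_distrib]
      exact sum_congr rfl fun j hj => by rw [epsLO_eq' hi him (mem_range.1 hj), neg_mul]
    simp only [Pi.add_apply, hy.anti i hi him, this]
    ring

end Eps

lemma sq_add_self_eq (u : ℕ) : (u : ℤ) ^ 2 + u = 2 * ((u + 1).choose 2 : ℤ) := by
  have h := Nat.add_one_mul_choose_eq u 1
  simp only [Nat.choose_one_right] at h
  zify at h
  linarith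

section Weights

variable (q : ℂ) (m : ℕ)

/-- Weight of the link between the variables with indices `i` and `i + 1`. -/
def linkWt (i u v : ℕ) : ℂ :=
  q ^ ((u : ℤ) ^ 2 - gamLO m i * u) * gbin q v u *
    (if m ∣ i then (-1) ^ u * q ^ (-((u + 1).choose 2 : ℤ)) else 1)

lemma linkWt_of_dvd {q : ℂ} (hq : q ≠ 0) {i : ℕ} (h : m ∣ i) (u v : ℕ) :
    linkWt q m i u v = (-1) ^ u * q ^ ((u + 1).choose 2 : ℤ) * gbin q v u := by
  have hg : gamLO m i = -1 := by
    obtain ⟨c, rfl⟩ := h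
    rw [gamLO, if_neg]
    intro ⟨h1, h2⟩
    have h3 : m ∣ m * c % (2 * m) := (Nat.dvd_mod_iff ⟨2, by ring⟩).2 ⟨c, rfl⟩
    have := Nat.le_of_dvd h1 h3
    omega
  have hc := sq_add_self_eq u
  rw [linkWt, if_pos h, hg, show (u : ℤ) ^ 2 - -1 * u = (u + 1).choose 2 + (u + 1).choose 2 by
    linarith, zpow_add₀ hq, zpow_neg]
  have := zpow_ne_zero ((u + 1).choose 2 : ℤ) hq
  field_simp

lemma gamLO_add {o : ℕ} (ho : 2 * m ∣ o) (i : ℕ) : gamLO m (i + o) = gamLO m i := by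
  obtain ⟨c, rfl⟩ := ho
  simp [gamLO]

lemma linkWt_add {o : ℕ} (ho : 2 * m ∣ o) (i u v : ℕ) :
    linkWt q m (i + o) u v = linkWt q m i u v := by
  have : m ∣ i + o ↔ m ∣ i := Nat.dvd_add_left ((Dvd.intro_left 2 rfl).trans ho)
  simp only [linkWt, this, gamLO_add m ho]

/-- Weight of a chain with variables of index below `L`. -/
def chainWt (L : ℕ) (y : ℕ → ℤ) (n : ℕ → ℕ) : ℂ :=
  ∏ i ∈ range L, (linkWt q m i (n i) (n (i + 1)) * q ^ (-(y i * n i)) *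
    ∏ j ∈ Ico (i + 1) L, q ^ (-(epsLO m i j * n i * n j)))

/-- Weight of the variable with local index `i` in the block starting at `o`. -/
def localWt (o : ℕ) (y : ℕ → ℤ) (n : ℕ → ℕ) (i : ℕ) : ℂ :=
  linkWt q m i (n (o + i)) (n (o + i + 1)) *
    q ^ (-(y i * n (o + i)) - (∑ j ∈ Ico (i + 1) (2 * m), epsLO m i j * n (o + j)) * n (o + i))

lemma prod_zpow_neg {q : ℂ} (hq : q ≠ 0) {ι : Type*} (s : Finset ι) (e : ι → ℤ) :
    ∏ i ∈ s, q ^ (-e i) = q ^ (-∑ i ∈ s, e i) := by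
  classical
  induction s using Finset.induction_on with
  | empty => simp
  | insert a s ha ih =>
    rw [prod_insert ha, sum_insert ha, ih, ← zpow_add₀ hq]
    congr 1
    ring

lemma chainWt_add {q : ℂ} (hq : q ≠ 0) {o : ℕ} (ho : 2 * m ∣ o) {y : ℕ → ℤ} (hy : GoodExp m y)
    (n : ℕ → ℕ) :
    chainWt q m (o + 2 * m) y n
      = (∏ i ∈ range (2 * m), localWt q m o y n i) * chainWt q m o (y + crossExp m o n) n := by
  rw [chainWt, prod_range_add, mul_comm]
  congr 1
  · refine prod_congr rfl fun i _ => ?_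
    rw [prod_zpow_neg hq, localWt, add_comm o i, linkWt_add q m ho, hy.periodic o ho,
      sub_eq_add_neg, zpow_add₀ hq, ← mul_assoc, show i + o + 1 = (i + 1) + o by ring,
      show o + 2 * m = 2 * m + o by ring, ← sum_Ico_add', sum_mul]
    congr 3
    refine sum_congr rfl fun j _ => ?_
    rw [epsLO_add_left ho, epsLO_add_right ho, add_comm o j]
    ring
  · refine prod_congr rfl fun i hi => ?_
    rw [mem_range] at hi
    rw [← prod_Ico_consecutive _ (show i + 1 ≤ o by omega) (show o ≤ o + 2 * m by omega),
      prod_Ico_eq_prod_range _ o (o + 2 * m), show o + 2 * m - o = 2 * m by omega,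
      prod_zpow_neg hq (range (2 * m))]
    have : ∑ j ∈ range (2 * m), epsLO m i (o + j) * n i * n (o + j) = crossExp m o n i * n i := by
      rw [crossExp, sum_mul]
      refine sum_congr rfl fun j _ => ?_
      rw [add_comm o j, epsLO_add_right ho]
      ring
    rw [this, Pi.add_apply, add_mul, neg_add, zpow_add₀ hq]
    ring

end Weights

section Local

variable {q : ℂ} {m o : ℕ} {y : ℕ → ℤ}

lemma localWt_of_lt (hq : q ≠ 0) (n : ℕ → ℕ) {i : ℕ} (hi : 1 ≤ i) (him : i < m) :
    localWt q m o y n i = q ^ ((n (o + i) : ℤ) ^ 2 - n (o + i) - y i * n (o + i)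
      - n (o + i) * (n (o + 2 * m - i) + n (o + 2 * m - (i + 1)))) *
      gbin q (n (o + (i + 1))) (n (o + i)) := by
  have h1 : ¬ m ∣ i := fun h => by have := Nat.le_of_dvd hi h; omega
  have h2 : gamLO m i = 1 := by
    rw [gamLO, Nat.mod_eq_of_lt (by omega), if_pos (by omega)]
  rw [localWt, linkWt, if_neg h1, h2, sum_epsLO o n hi him, mul_one, mul_right_comm,
    ← zpow_add₀ hq, show o + (2 * m - i) = o + 2 * m - i by omega,
    show o + (2 * m - 1 - i) = o + 2 * m - (i + 1) by omega, add_assoc o i 1]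
  congr 2
  ring

lemma localWt_sub (hq : q ≠ 0) (hy : GoodExp m y) (n : ℕ → ℕ) {i : ℕ} (hi : 1 ≤ i) (him : i < m) :
    localWt q m o y n (2 * m - i) = q ^ ((n (o + 2 * m - i) : ℤ) ^ 2 + n (o + 2 * m - i)
      + y i * n (o + 2 * m - i)) * gbin q (n (o + 2 * m - (i - 1))) (n (o + 2 * m - i)) := by
  have h1 : ¬ m ∣ 2 * m - i := fun h => by
    have := (Nat.dvd_sub_iff_right (show i ≤ 2 * m by omega) ⟨2, by ring⟩).1 h
    have := Nat.le_of_dvd hi this; omega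
  have h2 : gamLO m (2 * m - i) = -1 := by
    rw [gamLO, Nat.mod_eq_of_lt (by omega), if_neg (by omega)]
  rw [localWt, linkWt, if_neg h1, h2, sum_epsLO' o n (by omega) (by omega), mul_one,
    mul_right_comm, ← zpow_add₀ hq, hy.anti i hi him,
    show o + (2 * m - i) + 1 = o + 2 * m - (i - 1) by omega,
    show o + (2 * m - i) = o + 2 * m - i by omega]
  congr 2
  ring

lemma localWt_mid (hq : q ≠ 0) (hy : GoodExp m y) (n : ℕ → ℕ) (hm : 0 < m) :
    localWt q m o y n m = (-1) ^ n (o + m) * q ^ ((n (o + m) + 1).choose 2 : ℤ) *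
      gbin q (n (o + 2 * m - (m - 1))) (n (o + m)) := by
  rw [localWt, linkWt_of_dvd m hq dvd_rfl, hy.mid, sum_epsLO' o n (by omega) (by omega),
    show o + m + 1 = o + 2 * m - (m - 1) by omega]
  simp

lemma localWt_zero (hq : q ≠ 0) (hy : GoodExp m y) (n : ℕ → ℕ) (hm : 0 < m) :
    localWt q m o y n 0 = (-1) ^ n o * q ^ ((n o + 1).choose 2 : ℤ) *
      gbin q (n (o + 1)) (n o) := by
  rw [localWt, linkWt_of_dvd m hq (dvd_zero m), hy.zero, sum_epsLO' o n (by omega) (by omega)]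
  simp

lemma prod_localWt_mul_chainSum (hq : q ≠ 0) (hy : GoodExp m y) (n : ℕ → ℕ)
    {r i : ℕ} (hi : 1 ≤ i) (h : i + r = m) (t' : ℕ) :
    gbin q (n (o + i)) (n (o + (i - 1))) *
      q ^ (((t' : ℤ) - n (o + (i - 1))) * n (o + 2 * m - i)) *
      (∏ l ∈ Ico i (2 * m + 1 - i), localWt q m o y n l) *
      chainSum q (y + crossExp m o n) r i t' = levelSum q o m y r i t' n := by
  induction r generalizing i t' with
  | zero =>
    obtain rfl : i = m := by omega
    rw [show 2 * i + 1 - i = i + 1 by omega, Nat.Ico_succ_singleton, prod_singleton,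
      localWt_mid hq hy n (by omega), chainSum, levelSum, show o + 2 * i - i = o + i by omega,
      sub_eq_add_neg (((n (o + i) + 1).choose 2 : ℕ) : ℤ), zpow_add₀ hq, ← neg_mul, neg_sub]
    ring
  | succ r ih =>
    have hx : (y + crossExp m o n) i = y i + n (o + 2 * m - i) + n (o + 2 * m - (i + 1))
        - n (o + i) - n (o + (i - 1)) := by
      rw [Pi.add_apply, crossExp_eq o n hi (by omega),
        show o + (2 * m - i) = o + 2 * m - i by omega,
        show o + (2 * m - 1 - i) = o + 2 * m - (i + 1) by omega]
      ring
    rw [show 2 * m + 1 - i = (2 * m - i) + 1 by omega, prod_Ico_succ_top (by omega),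
      prod_eq_prod_Ico_succ_bot (show i < 2 * m - i by omega),
      localWt_of_lt hq n hi (by omega), localWt_sub hq hy n hi (by omega), chainSum, levelSum,
      mul_sum]
    refine sum_congr rfl fun t _ => ?_
    rw [← ih (by omega) (by omega) t, hx, show i + 1 - 1 = i by omega,
      show 2 * m + 1 - (i + 1) = 2 * m - i by omega]
    generalize ∏ l ∈ Ico (i + 1) (2 * m - i), localWt q m o y n l = P
    generalize chainSum q (y + crossExp m o n) r (i + 1) t = c
    generalize n (o + i) = a
    generalize n (o + (i - 1)) = a'
    generalize n (o + (i + 1)) = a''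
    generalize n (o + 2 * m - i) = b
    generalize n (o + 2 * m - (i - 1)) = b'
    generalize n (o + 2 * m - (i + 1)) = b''
    have e : q ^ (((t' : ℤ) - a') * b) * q ^ ((a : ℤ) ^ 2 - a - y i * a - a * (b + b'')) *
        q ^ ((b : ℤ) ^ 2 + b + y i * b) * q ^ ((t : ℤ) ^ 2 + t + (y i + b + b'' - a - a') * t)
        = q ^ (-((a' : ℤ) - t') * b + ((a : ℤ) - t) * b + t * ((a : ℤ) - a')) *
          q ^ (((t : ℤ) + b - a) ^ 2 + (t + b - a) + y i * (t + b - a)) *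
          q ^ (((t : ℤ) - a) * b'') := by
      simp only [← zpow_add₀ hq]
      congr 1
      ring
    linear_combination gbin q a a' * gbin q a'' a * gbin q b' b * gbin q t' t * P * c * e

lemma prod_localWt_mul_chainSum' (hq : q ≠ 0) (hy : GoodExp m y) (n : ℕ → ℕ) (hm : 0 < m) :
    (∏ i ∈ range (2 * m), localWt q m o y n i) *
      chainSum q (y + crossExp m o n) (m - 1) 1 (n o)
    = (-1) ^ n o * q ^ ((n o + 1).choose 2 : ℤ) * levelSum q o m y (m - 1) 1 (n o) n := by
  rw [← prod_localWt_mul_chainSum hq hy n le_rfl (by omega), range_eq_Ico,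
    prod_eq_prod_Ico_succ_bot (by omega), localWt_zero hq hy n hm]
  simp only [zero_add, Nat.add_sub_cancel, Nat.sub_self, add_zero, sub_self, zero_mul, zpow_zero]
  ring

end Local

/-- Summing a block over all of its variables except the first one. -/
lemma msum_prod_localWt {q : ℂ} (hq : q ≠ 0) {m o N : ℕ} {y : ℕ → ℤ} (hy : GoodExp m y)
    (hm : 0 < m) (n : ℕ → ℕ) (hn : n (o + 2 * m) < N) :
    msum N (levelList o m (m - 1) 1) (fun n' => (∏ i ∈ range (2 * m), localWt q m o y n' i) *
      chainSum q (y + crossExp m o n') (m - 1) 1 (n o)) n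
    = q ^ ((n o : ℤ) ^ 2 + n o) * gbin q (n (o + 2 * m)) (n o) *
      (gbin q (n (o + 2 * m)) (n o) * qPoch q q (n (o + 2 * m) - n o)) *
      chainSum q y (m - 1) 1 (n (o + 2 * m)) := by
  rw [msum_congr (F' := fun n' => ((-1) ^ n o * q ^ ((n o + 1).choose 2 : ℤ)) *
    levelSum q o m y (m - 1) 1 (n o) n')]
  · rw [msum_mul, msum_levelSum o m y hq le_rfl (by omega) (n o) n (by simpa using hn)]
    simp only [Nat.sub_self, add_zero, Nat.sub_zero, levelVal]
    rcases lt_or_ge (n (o + 2 * m)) (n o) with hlt | hge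
    · simp [gbin_eq_zero_of_lt q hlt]
    rw [show n o + (n (o + 2 * m) - n o) = n (o + 2 * m) by omega, sub_self, mul_zero, sub_zero]
    have h1 : ((-1 : ℂ) ^ n o) * (-1) ^ n o = 1 := by rw [← mul_pow]; simp
    have h2 : q ^ ((n o + 1).choose 2 : ℤ) * q ^ ((n o + 1).choose 2 : ℤ)
        = q ^ ((n o : ℤ) ^ 2 + n o) := by
      rw [← zpow_add₀ hq, sq_add_self_eq]
      congr 1
      ring
    rw [← h2]
    linear_combination q ^ ((n o + 1).choose 2 : ℤ) * q ^ ((n o + 1).choose 2 : ℤ) *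
      gbin q (n (o + 2 * m)) (n o) *
      (gbin q (n (o + 2 * m)) (n o) * qPoch q q (n (o + 2 * m) - n o)) *
      chainSum q y (m - 1) 1 (n (o + 2 * m)) * h1
  · intro ν hν
    have h0 : ν o = n o := hν o (by rw [mem_levelList o m (by omega)]; omega)
    rw [← h0]
    exact prod_localWt_mul_chainSum' hq hy ν hm

/-- Nested sum over chains `n ≥ k_{c-1} ≥ ⋯ ≥ k_1`. -/
def nestSum (q : ℂ) : ℕ → ℕ → ℂ
  | 0, k => if k = 0 then 1 else 0
  | c + 1, n => ∑ k ∈ range (n + 1), q ^ ((k : ℤ) ^ 2 + k) * gbin q n k * nestSum q c k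

lemma chainSum_zero_eq_nestSum (q : ℂ) (r i n : ℕ) :
    chainSum q (fun _ => 0) r i n = nestSum q (r + 1) n := by
  induction r generalizing i n with
  | zero => simp [chainSum, nestSum, gbin_zero_right]
  | succ r ih =>
    rw [chainSum, nestSum]
    refine sum_congr rfl fun s _ => ?_
    rw [ih]
    simp

/-- Extending a sum over `k ≤ n` of terms with a factor `[n; k]` to a sum over all `k < N`. -/
lemma sum_range_gbin (q : ℂ) {n N : ℕ} (hn : n < N) (f : ℕ → ℂ) :
    ∑ k ∈ range N, gbin q n k * f k = ∑ k ∈ range (n + 1), gbin q n k * f k := by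
  symm
  refine sum_subset (range_mono hn) fun k _ hk => ?_
  rw [mem_range, not_lt] at hk
  rw [gbin_eq_zero_of_lt q hk, zero_mul]

/-- Evaluation of the full chain sum with `c` blocks. -/
theorem msum_chainWt {q : ℂ} (hq : q ≠ 0) {m N : ℕ} (hm : 0 < m) (c : ℕ) {y : ℕ → ℤ}
    (hy : GoodExp m y) (n : ℕ → ℕ) (hn : n (2 * m * c) < N) :
    msum N (List.range (2 * m * c))
      (fun n' => (if n' 0 = 0 then 1 else 0) * chainWt q m (2 * m * c) y n') n
    = qPoch q q (n (2 * m * c)) * nestSum q c (n (2 * m * c)) *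
      chainSum q y (m - 1) 1 (n (2 * m * c)) := by
  induction c generalizing y n with
  | zero =>
    simp only [mul_zero, List.range_zero, msum, chainWt, range_zero, prod_empty, mul_one, nestSum]
    split_ifs with h
    · rw [h, chainSum_zero_right]
      simp [qPoch]
    · simp
  | succ c ih =>
    set o := 2 * m * c with ho
    rw [show 2 * m * (c + 1) = o + 2 * m by rw [ho]; ring] at hn ⊢
    have hdvd : 2 * m ∣ o := ⟨c, rfl⟩
    have hperm : (List.range (o + 2 * m)).Perm
        ((o :: levelList o m (m - 1) 1) ++ List.range o) := by
      refine (List.perm_ext_iff_of_nodup List.nodup_range ?_).2 fun j => ?_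
      · rw [List.nodup_append]
        refine ⟨List.nodup_cons.2 ⟨?_, nodup_levelList o m (by omega)⟩, List.nodup_range, ?_⟩
        · rw [mem_levelList o m (by omega)]; omega
        · intro a ha b hb
          rw [List.mem_cons, mem_levelList o m (by omega)] at ha
          rw [List.mem_range] at hb
          omega
      · rw [List.mem_append, List.mem_cons, mem_levelList o m (by omega), List.mem_range,
          List.mem_range]
        omega
    rw [msum_perm hperm, msum_append, msum_cons]
    set M := n (o + 2 * m) with hM
    have step : ∀ k ∈ range N, msum N (levelList o m (m - 1) 1)
        (msum N (List.range o) fun n' => (if n' 0 = 0 then 1 else 0) * chainWt q m (o + 2 * m) y n')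
          (Function.update n o k)
        = gbin q M k * (qPoch q q M * (q ^ ((k : ℤ) ^ 2 + k) * nestSum q c k) *
          chainSum q y (m - 1) 1 M) := by
      intro k hk
      set n1 := Function.update n o k with hn1
      have v0 : n1 o = k := by simp [hn1]
      have vM : n1 (o + 2 * m) = M := by rw [hn1, Function.update_of_ne (by omega)]
      rw [msum_congr (F' := fun n' => (qPoch q q k * nestSum q c k) *
        ((∏ i ∈ range (2 * m), localWt q m o y n' i) *
          chainSum q (y + crossExp m o n') (m - 1) 1 (n1 o)))]
      · rw [msum_mul, msum_prod_localWt hq hy hm n1 (by rwa [vM]), v0, vM]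
        rcases lt_or_ge M k with hlt | hge
        · simp [gbin_eq_zero_of_lt q hlt]
        · have h := gbin_mul_qPoch q (M - k) k
          rw [Nat.sub_add_cancel hge] at h
          rw [← h]
          ring
      · intro n2 hn2
        have w0 : n2 o = k := by
          rw [hn2 o (by rw [mem_levelList o m (by omega)]; omega), v0]
        rw [msum_congr (F' := fun n' => (∏ i ∈ range (2 * m), localWt q m o y n2 i) *
          ((if n' 0 = 0 then 1 else 0) * chainWt q m o (y + crossExp m o n2) n'))]
        · rw [msum_mul, ih (hy.add_crossExp o n2) n2 (by rw [w0]; exact mem_range.1 hk), w0, v0]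
          ring
        · intro n' hn'
          have w : ∀ j, o ≤ j → n' j = n2 j := fun j hj => hn' j (by rw [List.mem_range]; omega)
          have e1 : crossExp m o n' = crossExp m o n2 := by
            funext i
            exact sum_congr rfl fun j _ => by rw [w (o + j) (by omega)]
          have e2 : ∀ i, localWt q m o y n' i = localWt q m o y n2 i := fun i => by
            rw [localWt, localWt, w (o + i) (by omega), w (o + i + 1) (by omega),
              sum_congr rfl fun j _ => by rw [w (o + j) (by omega)]]
          rw [chainWt_add m hq hdvd hy, e1, prod_congr rfl fun i _ => e2 i]
          ring
    rw [sum_congr rfl step, sum_range_gbin q hn, nestSum, mul_sum, sum_mul]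
    refine sum_congr rfl fun k _ => ?_
    ring

lemma extTup_snoc (L N : ℕ) (k : Fin N) (f : Fin L → Fin N) :
    extTup (L + 1) N (Fin.snocEquiv (fun _ => Fin N) (k, f))
      = Function.update (extTup L N f) (L + 1) k := by
  funext i
  rcases eq_or_ne i (L + 1) with rfl | hi
  · rw [Function.update_self, extTup, dif_pos ⟨by omega, le_rfl⟩]
    congr 1
    exact Fin.snoc_last (α := fun _ => Fin N) k f
  · rw [Function.update_of_ne hi]
    by_cases h : 1 ≤ i ∧ i ≤ L
    · rw [extTup, extTup, dif_pos (by omega), dif_pos h]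
      congr 1
      exact Fin.snoc_castSucc (α := fun _ => Fin N) k f ⟨i - 1, by omega⟩
    · rw [extTup, extTup, dif_neg (by omega), dif_neg h]

lemma sum_extTup (L N : ℕ) (F : (ℕ → ℕ) → ℂ) :
    ∑ f : Fin L → Fin N, F (extTup L N f) = msum N (List.range' 1 L) F (fun _ => 0) := by
  induction L generalizing F with
  | zero =>
    simp only [univ_unique, sum_singleton, List.range'_zero, msum]
    congr 1
    funext i
    exact dif_neg (by omega)
  | succ L ih =>
    rw [List.range'_1_concat, msum_append, ← ih, ← (Fin.snocEquiv (fun _ => Fin N)).sum_comp,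
      Fintype.sum_prod_type_right]
    refine sum_congr rfl fun f _ => ?_
    simp only [msum, sum_range, extTup_snoc, add_comm 1 L]

lemma exists_extTup_succ_lt {L N : ℕ} {f : Fin L → Fin N} (h : ¬ ∀ i j, i ≤ j → f i ≤ f j) :
    ∃ i ∈ Icc 1 (L - 1), extTup L N f (i + 1) < extTup L N f i := by
  by_contra! hc
  refine h fun i j hij => ?_
  have key : ∀ b, i.1 + 1 ≤ b → b ≤ L → extTup L N f (i.1 + 1) ≤ extTup L N f b := by
    intro b hb
    induction b, hb using Nat.le_induction with
    | base => exact fun _ => le_rfl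
    | succ b hb ih =>
      exact fun hL => (ih (by omega)).trans (hc b (mem_Icc.2 ⟨by omega, by omega⟩))
  have := key (j.1 + 1) (Nat.succ_le_succ hij) j.2
  rwa [extTup, extTup, dif_pos ⟨by omega, i.2⟩, dif_pos ⟨by omega, j.2⟩] at this

/-- A sum over monotone tuples of terms vanishing at non-monotone tuples is an iterated sum. -/
lemma sum_filter_extTup (L N : ℕ) (F : (ℕ → ℕ) → ℂ)
    (hF : ∀ n : ℕ → ℕ, (∃ i ∈ Icc 1 (L - 1), n (i + 1) < n i) → F n = 0) :
    ∑ f ∈ univ.filter (fun f : Fin L → Fin N => ∀ i j, i ≤ j → f i ≤ f j), F (extTup L N f)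
      = msum N (List.range' 1 L) F (fun _ => 0) := by
  rw [← sum_extTup]
  refine sum_subset (filter_subset _ _) fun f _ hf => hF _ (exists_extTup_succ_lt ?_)
  simpa using hf

lemma nestSum_one (q : ℂ) (n : ℕ) : nestSum q 1 n = 1 := by
  rw [← chainSum_zero_eq_nestSum q 0 0 n]; rfl

lemma msum_nested (q : ℂ) (N l : ℕ) (Φ : ℕ → ℂ) (n : ℕ → ℕ) :
    msum N (List.range' 1 (l + 1)) (fun n => Φ (n (l + 1)) *
      ∏ i ∈ Icc 1 l, q ^ ((n i) ^ 2 + n i) * gbin q (n (i + 1)) (n i)) n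
    = ∑ k ∈ range N, Φ k * nestSum q (l + 1) k := by
  induction l generalizing Φ with
  | zero => simp [msum, nestSum_one]
  | succ l ih =>
    rw [List.range'_1_concat, msum_append, msum_congr (F' := fun n =>
      (fun j => ∑ k ∈ range N, Φ k * (q ^ (j ^ 2 + j) * gbin q k j)) (n (l + 1)) *
        ∏ i ∈ Icc 1 l, q ^ ((n i) ^ 2 + n i) * gbin q (n (i + 1)) (n i)),
      ih (fun j => ∑ k ∈ range N, Φ k * (q ^ (j ^ 2 + j) * gbin q k j))]
    · simp only [sum_mul]
      rw [sum_comm]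
      refine sum_congr rfl fun k hk => ?_
      have h := sum_range_gbin q (mem_range.1 hk)
        (fun j => q ^ (j ^ 2 + j) * nestSum q (l + 1) j)
      rw [nestSum]
      have e : ∀ j ∈ range (k + 1), q ^ ((j : ℤ) ^ 2 + j) * gbin q k j * nestSum q (l + 1) j
          = gbin q k j * (q ^ (j ^ 2 + j) * nestSum q (l + 1) j) := fun j _ => by
        norm_cast
        ring
      rw [sum_congr rfl e, ← h, mul_sum]
      exact sum_congr rfl fun j _ => by ring
    · intro n' _
      simp only [msum, sum_mul]
      refine sum_congr rfl fun k _ => ?_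
      have w : ∀ j, j ≤ l + 1 → Function.update n' (l + 1 + 1) k j = n' j := fun j hj =>
        Function.update_of_ne (by omega) _ _
      have e : ∏ i ∈ Icc 1 l, q ^ ((Function.update n' (l + 1 + 1) k i) ^ 2 +
            Function.update n' (l + 1 + 1) k i) *
          gbin q (Function.update n' (l + 1 + 1) k (i + 1)) (Function.update n' (l + 1 + 1) k i)
          = ∏ i ∈ Icc 1 l, q ^ ((n' i) ^ 2 + n' i) * gbin q (n' (i + 1)) (n' i) :=
        prod_congr rfl fun i hi => by
          rw [mem_Icc] at hi
          rw [w i (by omega), w (i + 1) (by omega)]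
      rw [add_comm 1 (l + 1), Function.update_self, prod_Icc_succ_top (by omega),
        Function.update_self, w (l + 1) le_rfl, e]
      ring

lemma sum_filter_nested (q : ℂ) {N L : ℕ} (hL : 0 < L) (Φ : ℕ → ℂ) :
    ∑ f ∈ univ.filter (fun f : Fin L → Fin N => ∀ i j, i ≤ j → f i ≤ f j),
      Φ (extTup L N f L) * ∏ i ∈ Icc 1 (L - 1), q ^ ((extTup L N f i) ^ 2 + extTup L N f i) *
        gbin q (extTup L N f (i + 1)) (extTup L N f i)
    = ∑ k ∈ range N, Φ k * nestSum q L k := by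
  obtain ⟨l, rfl⟩ : ∃ l, L = l + 1 := ⟨L - 1, by omega⟩
  rw [← msum_nested q N l Φ (fun _ => 0)]
  refine sum_filter_extTup (l + 1) N (fun n => Φ (n (l + 1)) *
      ∏ i ∈ Icc 1 l, q ^ ((n i) ^ 2 + n i) * gbin q (n (i + 1)) (n i)) fun n ⟨i, hi, hlt⟩ => ?_
  exact mul_eq_zero_of_right _ (prod_eq_zero hi (by rw [gbin_eq_zero_of_lt q hlt, mul_zero]))

lemma extTup_lt {L N : ℕ} (hN : 0 < N) (f : Fin L → Fin N) (i : ℕ) : extTup L N f i < N := by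
  rw [extTup]
  split_ifs
  · exact Fin.is_lt _
  · exact hN

/-- The two-chain side of the duality as a single sum. -/
lemma sum_two_chains (q : ℂ) {m p N : ℕ} (hm : 0 < m) (hp : 0 < p) (hN : 0 < N) :
    ∑ a ∈ univ.filter (fun a : Fin m → Fin N => ∀ i j, i ≤ j → a i ≤ a j),
        ∑ b ∈ univ.filter (fun b : Fin p → Fin N =>
              (∀ i j, i ≤ j → b i ≤ b j) ∧ extTup p N b p = extTup m N a m),
          (qPoch q q (extTup m N a m)) ^ 2 * q ^ (extTup m N a m) *
            (∏ i ∈ Icc 1 (m - 1), q ^ ((extTup m N a i) ^ 2 + extTup m N a i) *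
              gbin q (extTup m N a (i + 1)) (extTup m N a i)) *
            (∏ j ∈ Icc 1 (p - 1), q ^ ((extTup p N b j) ^ 2 + extTup p N b j) *
              gbin q (extTup p N b (j + 1)) (extTup p N b j))
    = ∑ k ∈ range N, (qPoch q q k) ^ 2 * q ^ k * nestSum q p k * nestSum q m k := by
  rw [← sum_filter_nested q hm (fun k => (qPoch q q k) ^ 2 * q ^ k * nestSum q p k)]
  refine sum_congr rfl fun a _ => ?_
  have h := sum_filter_nested q (N := N) hp (fun k => if k = extTup m N a m then (1 : ℂ) else 0)
  simp only [ite_mul, one_mul, zero_mul] at h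
  rw [sum_ite_eq', if_pos (mem_range.2 (extTup_lt hN a m)), ← sum_filter, filter_filter] at h
  rw [← mul_sum, h]
  ring

lemma mul_succ_div_two (u : ℕ) : ((u : ℤ) * ((u : ℤ) + 1)) / 2 = ((u + 1).choose 2 : ℤ) := by
  rw [show (u : ℤ) * ((u : ℤ) + 1) = 2 * ((u + 1).choose 2 : ℤ) by
    rw [← sq_add_self_eq]; ring]
  exact Int.mul_ediv_cancel_left _ two_ne_zero

lemma qPoch_eq_qPoch_inv {q : ℂ} (hq : q ≠ 0) (k : ℕ) :
    qPoch q q k = (-1) ^ k * q ^ ((k + 1).choose 2 : ℤ) * qPoch q⁻¹ q⁻¹ k := by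
  induction k with
  | zero => simp [qPoch]
  | succ k ih =>
    rw [qPoch_succ, ih, qPoch_succ, choose_two_add k 1]
    have h : q * q ^ k * (q⁻¹ * q⁻¹ ^ k) = 1 := by
      rw [← pow_succ', ← pow_succ', ← mul_pow, mul_inv_cancel₀ hq, one_pow]
    have e : q ^ (((k + 1).choose 2 + (1 + 1).choose 2 + k * 1 : ℕ) : ℤ)
        = q ^ ((k + 1).choose 2 : ℤ) * (q * q ^ k) := by
      rw [← pow_succ', ← zpow_natCast q (k + 1), ← zpow_add₀ hq]
      congr 1
      simp
      ring
    rw [e, pow_succ]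
    linear_combination - (-1) ^ k * q ^ ((k + 1).choose 2 : ℤ) * qPoch q⁻¹ q⁻¹ k * h

lemma linkWt_inv {q : ℂ} (hq : q ≠ 0) (m i u v : ℕ) :
    linkWt q⁻¹ m i u v = q ^ (-((u : ℤ) * v) + gamLO m i * u) * gbin q v u *
      (if m ∣ i then (-1) ^ u * q ^ (((u : ℤ) * ((u : ℤ) + 1)) / 2) else 1) := by
  have h : q⁻¹ ^ ((u : ℤ) ^ 2 - gamLO m i * u) * gbin q⁻¹ v u
      = q ^ (-((u : ℤ) * v) + gamLO m i * u) * gbin q v u := by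
    rcases lt_or_ge v u with hlt | hge
    · simp [gbin_eq_zero_of_lt _ hlt]
    obtain ⟨j, rfl⟩ := Nat.exists_eq_add_of_le' hge
    rw [gbin_eq_pow_mul_gbin_inv hq, ← mul_assoc, ← zpow_natCast, ← zpow_add₀ hq, inv_zpow']
    congr 2
    push_cast
    ring
  rw [linkWt, h, inv_zpow', neg_neg, mul_succ_div_two]

lemma chainWt_inv_eq {q : ℂ} (hq : q ≠ 0) (m L : ℕ) (n : ℕ → ℕ) (h0 : n 0 = 0) :
    chainWt q⁻¹ m (L + 1) (fun _ => 0) n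
      = (∏ i ∈ Icc 1 L, q ^ (-((n i : ℤ) * n (i + 1)) + gamLO m i * n i) *
          gbin q (n (i + 1)) (n i)) *
        (∏ i ∈ (Icc 1 L).filter (m ∣ ·), (-1) ^ n i * q ^ (((n i : ℤ) * ((n i : ℤ) + 1)) / 2)) *
        ∏ i ∈ (Icc 1 L).filter (fun i => ¬ m ∣ i), ∏ j ∈ Icc (i + 1) L,
          q ^ (epsLO m i j * (n i : ℤ) * (n j : ℤ)) := by
  have hI : Ico 1 (L + 1) = Icc 1 L := by ext; simp
  rw [chainWt, range_eq_Ico, prod_eq_prod_Ico_succ_bot (by omega), zero_add, hI, prod_filter,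
    prod_filter, ← prod_mul_distrib, ← prod_mul_distrib]
  have h1 : linkWt q⁻¹ m 0 (n 0) (n 1) = 1 := by
    simp [linkWt_of_dvd m (inv_ne_zero hq) (dvd_zero m), h0, gbin_zero_right]
  rw [h1, h0]
  simp only [Nat.cast_zero, mul_zero, neg_zero, zpow_zero, prod_const_one, one_mul, mul_one,
    zero_mul]
  refine prod_congr rfl fun i _ => ?_
  rw [linkWt_inv hq]
  congr 1
  split_ifs with h
  · exact prod_eq_one fun j _ => by simp [epsLO_of_dvd h]
  · refine prod_congr ?_ fun j _ => ?_
    · ext; simp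
    · rw [inv_zpow', neg_neg]

lemma prod_filter_dvd {m p : ℕ} (hm : 0 < m) (g : ℕ → ℂ) :
    ∏ i ∈ (Icc 1 (2 * m * p - 1)).filter (m ∣ ·), g i = ∏ i ∈ Icc 1 (2 * p - 1), g (m * i) := by
  symm
  refine prod_bij (fun i _ => m * i) ?_ ?_ ?_ fun _ _ => rfl
  · intro i hi
    rw [mem_Icc] at hi
    rw [mem_filter, mem_Icc]
    have h1 : m * (i + 1) ≤ m * (2 * p) := Nat.mul_le_mul_left m (by omega)
    have h2 : m * (2 * p) = 2 * m * p := by ring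
    have h3 : 0 < m * i := Nat.mul_pos hm hi.1
    rw [mul_add] at h1
    exact ⟨⟨by omega, by omega⟩, dvd_mul_right m i⟩
  · intro a _ b _ hab
    exact Nat.eq_of_mul_eq_mul_left hm hab
  · intro b hb
    rw [mem_filter, mem_Icc] at hb
    obtain ⟨⟨hb1, hb2⟩, c, rfl⟩ := hb
    refine ⟨c, ?_, rfl⟩
    have hc : 0 < c := Nat.pos_of_mul_pos_left hb1
    have h2 : m * (2 * p) = 2 * m * p := by ring
    have h3 : c < 2 * p := lt_of_mul_lt_mul_left (show m * c < m * (2 * p) by omega) m.zero_le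
    rw [mem_Icc]
    omega

lemma goodExp_zero (m : ℕ) : GoodExp m (fun _ => 0) where
  periodic _ _ _ := rfl
  zero := rfl
  mid := rfl
  anti _ _ _ := by simp

/-- The sum over a chain with bottom variable `0` and top variable `M`. -/
lemma msum_range'_chainWt {q : ℂ} (hq : q ≠ 0) {m p N M : ℕ} (hm : 0 < m) (hp : 0 < p)
    (hM : M < N) :
    msum N (List.range' 1 (2 * m * p - 1)) (chainWt q m (2 * m * p) (fun _ => 0))
      (Function.update (fun _ => 0) (2 * m * p) M)
    = qPoch q q M * nestSum q p M * nestSum q m M := by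
  set n : ℕ → ℕ := Function.update (fun _ => 0) (2 * m * p) M with hn
  have hpos : 0 < 2 * m * p := by positivity
  have vM : n (2 * m * p) = M := by simp [hn]
  have v0 : n 0 = 0 := by rw [hn, Function.update_of_ne hpos.ne]
  have h := msum_chainWt hq hm p (goodExp_zero m) n (vM.symm ▸ hM : n (2 * m * p) < N)
  rw [vM, chainSum_zero_eq_nestSum, Nat.sub_add_cancel hm, List.range_eq_range',
    show List.range' 0 (2 * m * p) = 0 :: List.range' 1 (2 * m * p - 1) by
      obtain ⟨L, hL⟩ := Nat.exists_eq_add_of_lt hpos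
      rw [hL, zero_add]; rfl, msum_cons,
    sum_eq_single_of_mem 0 (mem_range.2 (by omega))] at h
  · rw [← h, show Function.update n 0 0 = n from Function.update_eq_self_iff.2 v0.symm]
    refine msum_congr fun n' hn' => ?_
    rw [hn' 0 (by simp), v0, if_pos rfl, one_mul]
  · intro k _ hk
    rw [msum_congr (F' := fun n' => 0 * chainWt q m (2 * m * p) (fun _ => 0) n'), msum_mul,
      zero_mul]
    intro n' hn'
    rw [hn' 0 (by simp), Function.update_self, if_neg hk]

/-- The summand of the Kontsevich–Zagier side. -/
def kzTerm (m p : ℕ) (ζ : ℂ) (n : ℕ → ℕ) : ℂ :=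
  qPoch ζ ζ (n (2 * m * p - 1)) * (-1 : ℂ) ^ (n (2 * m * p - 1)) *
    ζ ^ (-(((n (2 * m * p - 1) : ℤ) * ((n (2 * m * p - 1) : ℤ) + 1)) / 2)) *
    (∏ i ∈ (Icc 1 (2 * m * p - 1)).filter (fun i => ¬ m ∣ i),
      ∏ j ∈ Icc (i + 1) (2 * m * p - 1), ζ ^ (epsLO m i j * (n i : ℤ) * (n j : ℤ))) *
    (∏ i ∈ Icc 1 (2 * p - 1),
      (-1 : ℂ) ^ (n (m * i)) * ζ ^ (((n (m * i) : ℤ) * ((n (m * i) : ℤ) + 1)) / 2)) *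
    (∏ i ∈ Icc 1 (2 * m * p - 2),
      ζ ^ (-((n i : ℤ) * (n (i + 1) : ℤ)) + gamLO m i * (n i : ℤ)) * gbin ζ (n (i + 1)) (n i))

lemma mul_kzTerm {m p N : ℕ} (hm : 0 < m) (hp : 0 < p) (hN : 0 < N) {ζ : ℂ} (hζ : ζ ^ N = 1)
    (n : ℕ → ℕ) (h0 : n 0 = 0) :
    ζ * kzTerm m p ζ n = ∑ M ∈ range N, (ζ⁻¹ ^ M * qPoch ζ⁻¹ ζ⁻¹ M) *
      chainWt ζ⁻¹ m (2 * m * p) (fun _ => 0) (Function.update n (2 * m * p) M) := by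
  have hζ0 : ζ ≠ 0 := by rintro rfl; simp [hN.ne'] at hζ
  have hL : 2 * m * p = (2 * m * p - 2) + 1 + 1 := by
    have : 2 * 1 * 1 ≤ 2 * m * p := by gcongr <;> omega
    omega
  have hdiv := prod_filter_dvd (p := p) hm
    (fun i => (-1 : ℂ) ^ n i * ζ ^ (((n i : ℤ) * ((n i : ℤ) + 1)) / 2))
  have hγ : gamLO m (2 * m * p - 1) = -1 := by
    have : (2 * m * p - 1) % (2 * m) = 2 * m - 1 := by
      obtain ⟨c, rfl⟩ : ∃ c, p = c + 1 := ⟨p - 1, by omega⟩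
      rw [show 2 * m * (c + 1) - 1 = 2 * m - 1 + 2 * m * c by rw [mul_add]; omega,
        Nat.add_mul_mod_self_left, Nat.mod_eq_of_lt (by omega)]
    rw [gamLO, this, if_neg (by omega)]
  rw [kzTerm, ← hdiv]
  generalize hl : 2 * m * p - 2 = l at *
  obtain hL1 : 2 * m * p - 1 = l + 1 := by omega
  rw [hL1] at hγ ⊢
  rw [hL]
  set E := ∏ i ∈ (Icc 1 (l + 1)).filter (fun i => ¬ m ∣ i),
      ∏ j ∈ Icc (i + 1) (l + 1), ζ ^ (epsLO m i j * (n i : ℤ) * (n j : ℤ)) with hE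
  set S := ∏ i ∈ (Icc 1 (l + 1)).filter (m ∣ ·),
      (-1 : ℂ) ^ n i * ζ ^ (((n i : ℤ) * ((n i : ℤ) + 1)) / 2) with hS
  set G := ∏ i ∈ Icc 1 l, ζ ^ (-((n i : ℤ) * (n (i + 1) : ℤ)) + gamLO m i * (n i : ℤ)) *
    gbin ζ (n (i + 1)) (n i) with hG
  set k := n (l + 1) with hk
  have top : ∀ M, chainWt ζ⁻¹ m (l + 1 + 1) (fun _ => 0) (Function.update n (l + 1 + 1) M)
      = ζ⁻¹ ^ (k * (k + 1)) * gbin ζ⁻¹ M k * (G * S * E) := by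
    intro M
    have w : ∀ j, j ≤ l + 1 → Function.update n (l + 1 + 1) M j = n j := fun j hj =>
      Function.update_of_ne (by omega) _ _
    rw [chainWt_inv_eq hζ0 m (l + 1) _ (by rw [w 0 (by omega), h0]), prod_Icc_succ_top (by omega),
      w (l + 1) le_rfl, Function.update_self, hγ]
    have e1 : ζ ^ (-((k : ℤ) * M) + -1 * k) * gbin ζ M k
        = ζ⁻¹ ^ (k * (k + 1)) * gbin ζ⁻¹ M k := by
      rcases lt_or_ge M k with hlt | hge
      · simp [gbin_eq_zero_of_lt _ hlt]
      obtain ⟨j, rfl⟩ := Nat.exists_eq_add_of_le' hge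
      rw [gbin_eq_pow_mul_gbin_inv hζ0, ← mul_assoc, ← zpow_natCast, ← zpow_add₀ hζ0,
        ← zpow_natCast, inv_zpow']
      congr 2
      push_cast
      ring
    have e2 : ∏ i ∈ Icc 1 l, ζ ^ (-((Function.update n (l + 1 + 1) M i : ℤ) *
        Function.update n (l + 1 + 1) M (i + 1)) + gamLO m i * Function.update n (l + 1 + 1) M i) *
        gbin ζ (Function.update n (l + 1 + 1) M (i + 1)) (Function.update n (l + 1 + 1) M i)
        = G := prod_congr rfl fun i hi => by
      rw [mem_Icc] at hi
      rw [w i (by omega), w (i + 1) (by omega)]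
    rw [e2, e1]
    have e3 : ∏ i ∈ (Icc 1 (l + 1)).filter (m ∣ ·), (-1 : ℂ) ^ Function.update n (l + 1 + 1) M i *
        ζ ^ (((Function.update n (l + 1 + 1) M i : ℤ) *
          ((Function.update n (l + 1 + 1) M i : ℤ) + 1)) / 2) = S :=
      prod_congr rfl fun i hi => by
        rw [w i (mem_Icc.1 (mem_filter.1 hi).1).2]
    have e4 : ∏ i ∈ (Icc 1 (l + 1)).filter (fun i => ¬ m ∣ i), ∏ j ∈ Icc (i + 1) (l + 1),
        ζ ^ (epsLO m i j * (Function.update n (l + 1 + 1) M i : ℤ) *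
          (Function.update n (l + 1 + 1) M j : ℤ)) = E :=
      prod_congr rfl fun i hi => prod_congr rfl fun j hj => by
        rw [w i (mem_Icc.1 (mem_filter.1 hi).1).2, w j (mem_Icc.1 hj).2]
    rw [e3, e4]
    ring
  simp only [top]
  have hsum := sum_pow_mul_qPoch_mul_gbin hN (q := ζ⁻¹) (by rw [inv_pow, hζ, inv_one]) k
  have hflip := qPoch_eq_qPoch_inv hζ0 k
  rw [← hsum] at hflip
  rw [hflip, mul_succ_div_two, zpow_neg]
  have h1 : ((-1 : ℂ) ^ k) * (-1) ^ k = 1 := by rw [← mul_pow]; simp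
  have h2 := mul_inv_cancel₀ (zpow_ne_zero ((k + 1).choose 2 : ℤ) hζ0)
  have h3 := mul_inv_cancel₀ hζ0
  have h4 : ∑ M ∈ range N, ζ⁻¹ ^ M * qPoch ζ⁻¹ ζ⁻¹ M *
      (ζ⁻¹ ^ (k * (k + 1)) * gbin ζ⁻¹ M k * (G * S * E))
      = (∑ M ∈ range N, ζ⁻¹ ^ M * qPoch ζ⁻¹ ζ⁻¹ M * gbin ζ⁻¹ M k) *
        (ζ⁻¹ ^ (k * (k + 1)) * (G * S * E)) := by
    rw [sum_mul]
    exact sum_congr rfl fun M _ => by ring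
  rw [h4, pow_succ ζ⁻¹ (k * (k + 1))]
  generalize ∑ M ∈ range N, ζ⁻¹ ^ M * qPoch ζ⁻¹ ζ⁻¹ M * gbin ζ⁻¹ M k = T
  calc _ = ((-1 : ℂ) ^ k * (-1) ^ k) *
        (ζ ^ ((k + 1).choose 2 : ℤ) * (ζ ^ ((k + 1).choose 2 : ℤ))⁻¹) * (ζ * ζ⁻¹) *
        (T * (ζ⁻¹ ^ (k * (k + 1)) * (G * S * E))) := by ring
    _ = _ := by rw [h1, h2, h3]; ring

/-- The Kontsevich–Zagier side of the duality as a single sum. -/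
lemma mul_sum_kzTerm {m p N : ℕ} (hm : 0 < m) (hp : 0 < p) (hN : 0 < N) {ζ : ℂ}
    (hζ : ζ ^ N = 1) :
    ζ * ∑ f ∈ univ.filter (fun f : Fin (2 * m * p - 1) → Fin N => ∀ i j, i ≤ j → f i ≤ f j),
        kzTerm m p ζ (extTup (2 * m * p - 1) N f)
    = ∑ k ∈ range N, (qPoch ζ⁻¹ ζ⁻¹ k) ^ 2 * ζ⁻¹ ^ k * nestSum ζ⁻¹ p k * nestSum ζ⁻¹ m k := by
  have hζ0 : ζ ≠ 0 := by rintro rfl; simp [hN.ne'] at hζ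
  have hpos : 0 < 2 * m * p := by positivity
  rw [sum_filter_extTup, ← msum_mul, msum_congr fun n' hn' => mul_kzTerm hm hp hN hζ n'
    (hn' 0 (by simp)), msum_sum_mul]
  · refine sum_congr rfl fun M hM => ?_
    rw [msum_comp_update (by simp; omega),
      msum_range'_chainWt (inv_ne_zero hζ0) hm hp (mem_range.1 hM)]
    ring
  · rintro n ⟨i, hi, hlt⟩
    rw [Nat.sub_sub] at hi
    exact mul_eq_zero_of_right _ (prod_eq_zero hi (by rw [gbin_eq_zero_of_lt ζ hlt, mul_zero]))

/-- Corollary 1.3 (Lovejoy–Osburn): duality at roots of unity,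
`F_(m,p)(ζ) = U_(m,p)(-1; ζ⁻¹)`. -/
theorem F_U_duality
    (m p N : ℕ) (hm : 0 < m) (hp : 0 < p) (hN : 0 < N)
    (ζ : ℂ) (hζ : ζ ^ N = 1) :
    ζ *
      ∑ f ∈ Finset.univ.filter
          (fun f : Fin (2 * m * p - 1) → Fin N => ∀ i j, i ≤ j → f i ≤ f j),
        (let n := extTup (2 * m * p - 1) N f
        qPoch ζ ζ (n (2 * m * p - 1)) * (-1 : ℂ) ^ (n (2 * m * p - 1)) *
          ζ ^ (-(((n (2 * m * p - 1) : ℤ) * ((n (2 * m * p - 1) : ℤ) + 1)) / 2)) *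
          (∏ i ∈ (Icc 1 (2 * m * p - 1)).filter (fun i => ¬ m ∣ i),
            ∏ j ∈ Icc (i + 1) (2 * m * p - 1),
              ζ ^ (epsLO m i j * (n i : ℤ) * (n j : ℤ))) *
          (∏ i ∈ Icc 1 (2 * p - 1),
            (-1 : ℂ) ^ (n (m * i)) *
              ζ ^ (((n (m * i) : ℤ) * ((n (m * i) : ℤ) + 1)) / 2)) *
          (∏ i ∈ Icc 1 (2 * m * p - 2),
            ζ ^ (-((n i : ℤ) * (n (i + 1) : ℤ)) + gamLO m i * (n i : ℤ)) *
              gbin ζ (n (i + 1)) (n i)))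
    = ∑ a ∈ Finset.univ.filter
          (fun a : Fin m → Fin N => ∀ i j, i ≤ j → a i ≤ a j),
        ∑ b ∈ Finset.univ.filter
            (fun b : Fin p → Fin N =>
              (∀ i j, i ≤ j → b i ≤ b j) ∧ extTup p N b p = extTup m N a m),
          (let na := extTup m N a
          let sb := extTup p N b
          (qPoch ζ⁻¹ ζ⁻¹ (na m)) ^ 2 * ζ⁻¹ ^ (na m) *
            (∏ i ∈ Icc 1 (m - 1),
              ζ⁻¹ ^ ((na i) ^ 2 + na i) * gbin ζ⁻¹ (na (i + 1)) (na i)) *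
            (∏ j ∈ Icc 1 (p - 1),
              ζ⁻¹ ^ ((sb j) ^ 2 + sb j) * gbin ζ⁻¹ (sb (j + 1)) (sb j))) := by
  exact (mul_sum_kzTerm hm hp hN hζ).trans (sum_two_chains ζ⁻¹ hm hp hN).symm

end
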